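/- arXiv:1504.01029 — 3 statements merged into one kernel-verified Lean document; each statement's English description precedes it below -/
import Mathlib

section
/- (Urysohn inequality) For every convex body K ⊂ ℝ^n, the volume radius of K is at most its mean width: vrad(K) ≤ w(K). -/
/-!
Urysohn's inequality is the first-order form of the Brunn–Minkowski inequality at the Euclidean ball.
Volume radius and mean width are both homogeneous of degree one, so `K` may be assumed to have the
volume of the unit ball `B`. The multiplicative Brunn–Minkowski inequality (`brunn_minkowski`) then
gives `vol B ≤ vol ((1 - t) B + t K)` for `0 < t < 1`. A point `ρ u` of a body, with `u` a unit
vector, satisfies `ρ ≤ h(u)` for the support function `h` of the body; the support function of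
`(1 - t) B + t K` is `1 - t + t h_K`, so polar coordinates yield
`1 ≤ ∫ (1 + t (h_K - 1))ⁿ dσ = 1 + n t (w(K) - 1) + O(t²)`. Letting `t → 0` gives `1 ≤ w(K)`.

Brunn–Minkowski is obtained from the Prékopa–Leindler inequality (`prekopa_leindler`), which is
proved by induction on the dimension; the one-dimensional case rests on the layer-cake formula and
`|A + B| ≥ |A| + |B|` for subsets of the line.
-/

open MeasureTheory Metric
open scoped RealInnerProductSpace Pointwise

noncomputable section

/-- The uniform probability measure on the unit Euclidean sphere of `ℝ^n`. -/
def sphereUniform (n : ℕ) : Measure (sphere (0 : EuclideanSpace ℝ (Fin n)) 1) :=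
  (((volume : Measure (EuclideanSpace ℝ (Fin n))).toSphere Set.univ)⁻¹) •
    (volume : Measure (EuclideanSpace ℝ (Fin n))).toSphere

/-- The mean width `w(K) = ∫_{S^{n-1}} max_{x ∈ K} ⟪x, u⟫ dσ(u)` of a subset of `ℝ^n`,
with `σ` the uniform probability measure on the unit sphere. -/
def meanWidth {n : ℕ} (K : Set (EuclideanSpace ℝ (Fin n))) : ℝ :=
  ∫ u, sSup ((fun x => ⟪x, (u : EuclideanSpace ℝ (Fin n))⟫) '' K) ∂(sphereUniform n)

/-- The volume radius `vrad(K) = (vol K / vol Bⁿ)^{1/n}` of a subset of `ℝ^n`. -/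
def volRad {n : ℕ} (K : Set (EuclideanSpace ℝ (Fin n))) : ℝ :=
  ((volume K).toReal / (volume (ball (0 : EuclideanSpace ℝ (Fin n)) 1)).toReal) ^ ((n : ℝ)⁻¹)

/-- The center of mass (barycenter) of a subset of `ℝ^n`. -/
def centerOfMass {n : ℕ} (K : Set (EuclideanSpace ℝ (Fin n))) : EuclideanSpace ℝ (Fin n) :=
  (volume K).toReal⁻¹ • ∫ x in K, x ∂volume

end

open scoped ENNReal

/-! ### The Prékopa–Leindler and Brunn–Minkowski inequalities -/

/-- The translates of `A` by `min B` and of `B` by `max A` lie in `A + B` and meet in one point. -/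
lemma volume_add_le_of_isCompact {A B C : Set ℝ} (hA : IsCompact A) (hB : IsCompact B)
    (hA' : A.Nonempty) (hB' : B.Nonempty) (hC : ∀ a ∈ A, ∀ b ∈ B, a + b ∈ C) :
    volume A + volume B ≤ volume C := by
  obtain ⟨a, ha, hamax⟩ := hA.exists_isGreatest hA'
  obtain ⟨b, hb, hbmin⟩ := hB.exists_isLeast hB'
  have h1 : volume ((fun x => x + b) '' A ∪ (fun x => a + x) '' B) = volume A + volume B := by
    rw [measure_union₀, Set.image_add_right, Set.image_add_left, measure_preimage_add_right,
      measure_preimage_add]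
    · exact (hB.image (by fun_prop)).measurableSet.nullMeasurableSet
    · refine measure_mono_null (t := {a + b}) ?_ (by simp)
      rintro _ ⟨⟨x, hx, rfl⟩, ⟨y, hy, hxy⟩⟩
      have := hamax hx
      have := hbmin hy
      simp only at hxy
      simp only [Set.mem_singleton_iff]
      linarith
  rw [← h1]
  refine measure_mono ?_
  rintro _ (⟨x, hx, rfl⟩ | ⟨y, hy, rfl⟩)
  · exact hC _ hx _ hb
  · exact hC _ ha _ hy

/-- The one-dimensional Brunn–Minkowski inequality for nonempty measurable sets. Any `C ⊇ A + B` is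
allowed, so that no measurability of `A + B` is needed. -/
lemma volume_add_le {A B C : Set ℝ} (hA : MeasurableSet A) (hB : MeasurableSet B)
    (hA' : A.Nonempty) (hB' : B.Nonempty) (hC : ∀ a ∈ A, ∀ b ∈ B, a + b ∈ C) :
    volume A + volume B ≤ volume C := by
  -- Adjoining a fixed point keeps the compact approximants nonempty.
  have key : ∀ S : Set ℝ, MeasurableSet S → ∀ x ∈ S, ∀ r < volume S,
      ∃ T ⊆ S, IsCompact T ∧ T.Nonempty ∧ r < volume T := by
    intro S hS x hx r hr
    obtain ⟨T, hTS, hT, hrT⟩ := hS.exists_lt_isCompact hr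
    exact ⟨insert x T, Set.insert_subset hx hTS, hT.insert x, Set.insert_nonempty _ _,
      hrT.trans_le (measure_mono (Set.subset_insert _ _))⟩
  obtain ⟨a, ha⟩ := hA'
  obtain ⟨b, hb⟩ := hB'
  rcases eq_or_ne (volume A) 0 with h0 | h0
  · rw [h0, zero_add, ← measure_preimage_add volume (-a) B]
    exact measure_mono fun y hy => by simpa using hC a ha _ hy
  rcases eq_or_ne (volume B) 0 with h1 | h1
  · rw [h1, add_zero, ← measure_preimage_add_right volume (-b) A]
    exact measure_mono fun y hy => by simpa using hC _ hy b hb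
  refine le_of_forall_lt fun c hc => ?_
  obtain ⟨r, hr, s, hs, hrs⟩ := ENNReal.exists_lt_add_of_lt_add hc h0 h1
  obtain ⟨A', hAA', hA', hA0, hrA⟩ := key A hA a ha r hr
  obtain ⟨B', hBB', hB', hB0, hsB⟩ := key B hB b hb s hs
  exact (hrs.trans (ENNReal.add_lt_add hrA hsB)).trans_le
    (volume_add_le_of_isCompact hA' hB' hA0 hB0 fun x hx y hy => hC x (hAA' hx) y (hBB' hy))

/-- The weighted arithmetic-geometric mean inequality in `ℝ≥0∞`. -/
lemma ennreal_geom_mean_le {s t : ℝ} (hs : 0 < s) (ht : 0 < t) (hst : s + t = 1) (a b : ℝ≥0∞) :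
    a ^ s * b ^ t ≤ ENNReal.ofReal s * a + ENNReal.ofReal t * b := by
  have hc : (s⁻¹).HolderConjugate t⁻¹ :=
    Real.holderConjugate_iff.2 ⟨(one_lt_inv₀ hs).2 (by linarith), by simpa using hst⟩
  have := ENNReal.young_inequality (a ^ s) (b ^ t) hc
  rw [← ENNReal.rpow_mul, ← ENNReal.rpow_mul, mul_inv_cancel₀ hs.ne', mul_inv_cancel₀ ht.ne',
    ENNReal.rpow_one, ENNReal.rpow_one, ENNReal.ofReal_inv_of_pos hs,
    ENNReal.ofReal_inv_of_pos ht, div_eq_mul_inv, div_eq_mul_inv, inv_inv, inv_inv] at this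
  rwa [mul_comm _ a, mul_comm _ b]

/-- The layer-cake formula for `ℝ≥0∞`-valued functions bounded by `1`. -/
lemma lintegral_layer {f : ℝ → ℝ≥0∞} (hf : Measurable f) (hf1 : ∀ x, f x ≤ 1) :
    ∫⁻ x, f x = ∫⁻ r in Set.Ioi (0 : ℝ), volume {x | ENNReal.ofReal r < f x} := by
  have hfin : ∀ x, f x ≠ ∞ := fun x => ((hf1 x).trans_lt ENNReal.one_lt_top).ne
  have h := lintegral_eq_lintegral_meas_lt (volume : Measure ℝ) (f := fun x => (f x).toReal)
    (Filter.Eventually.of_forall fun x => ENNReal.toReal_nonneg) hf.ennreal_toReal.aemeasurable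
  simp only [ENNReal.ofReal_toReal (hfin _)] at h
  rw [h]
  refine setLIntegral_congr_fun measurableSet_Ioi fun r hr => ?_
  simp only [ENNReal.ofReal_lt_iff_lt_toReal (le_of_lt hr) (hfin _)]

/-- For functions of supremum `1` the superlevel sets of `f` and `g` at every height in `(0, 1)` are
nonempty, so `volume_add_le` applies to them. Integrating over the height gives the stronger bound
`s ∫ f + t ∫ g ≤ ∫ h`. -/
lemma prekopa_leindler_normalized {s t : ℝ} (hs : 0 < s) (ht : 0 < t) (hst : s + t = 1)
    {f g h : ℝ → ℝ≥0∞} (hf : Measurable f) (hg : Measurable g) (hh : Measurable h)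
    (hf1 : ⨆ x, f x = 1) (hg1 : ⨆ x, g x = 1)
    (H : ∀ x y, f x ^ s * g y ^ t ≤ h (s * x + t * y)) :
    (∫⁻ x, f x) ^ s * (∫⁻ x, g x) ^ t ≤ ∫⁻ x, h x := by
  have hfle : ∀ x, f x ≤ 1 := fun x => hf1 ▸ le_iSup f x
  have hgle : ∀ x, g x ≤ 1 := fun x => hg1 ▸ le_iSup g x
  refine (ennreal_geom_mean_le hs ht hst _ _).trans ?_
  refine le_trans ?_ (lintegral_mono (fun x => min_le_left (h x) 1))
  rw [lintegral_layer hf hfle, lintegral_layer hg hgle,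
    lintegral_layer (hh.min measurable_const) (fun x => min_le_right _ _),
    ← lintegral_const_mul' _ _ ENNReal.ofReal_ne_top,
    ← lintegral_const_mul' _ _ ENNReal.ofReal_ne_top]
  refine (le_lintegral_add _ _).trans (setLIntegral_mono' measurableSet_Ioi fun r hr => ?_)
  rcases lt_or_ge r 1 with hr1 | hr1
  · have hr' : ENNReal.ofReal r < 1 := by simpa using hr1
    have hA : {x | ENNReal.ofReal r < f x}.Nonempty := by
      rw [← hf1] at hr'
      exact lt_iSup_iff.1 hr'
    have hB : {x | ENNReal.ofReal r < g x}.Nonempty := by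
      rw [← hg1] at hr'
      exact lt_iSup_iff.1 hr'
    have := volume_add_le (A := s • {x | ENNReal.ofReal r < f x})
      (B := t • {x | ENNReal.ofReal r < g x})
      (C := {x | ENNReal.ofReal r < min (h x) 1})
      ((measurableSet_lt measurable_const hf).const_smul₀ s)
      ((measurableSet_lt measurable_const hg).const_smul₀ t)
      (hA.smul_set) (hB.smul_set) ?_
    · simpa [Measure.addHaar_smul, abs_of_pos hs, abs_of_pos ht] using this
    · rintro _ ⟨x, hx, rfl⟩ _ ⟨y, hy, rfl⟩
      refine lt_min (lt_of_lt_of_le ?_ (H x y)) hr'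
      have h0 : ENNReal.ofReal r ≠ 0 := by simpa using hr
      calc ENNReal.ofReal r = ENNReal.ofReal r ^ s * ENNReal.ofReal r ^ t := by
            rw [← ENNReal.rpow_add _ _ h0 ENNReal.ofReal_ne_top, hst, ENNReal.rpow_one]
        _ < _ := ENNReal.mul_lt_mul (ENNReal.rpow_lt_rpow hx hs) (ENNReal.rpow_lt_rpow hy ht)
  · have hr' : 1 ≤ ENNReal.ofReal r := by simpa using hr1
    have hA : {x | ENNReal.ofReal r < f x} = ∅ :=
      Set.eq_empty_of_forall_notMem fun x hx => absurd (hfle x) (not_le.2 (hr'.trans_lt hx))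
    have hB : {x | ENNReal.ofReal r < g x} = ∅ :=
      Set.eq_empty_of_forall_notMem fun x hx => absurd (hgle x) (not_le.2 (hr'.trans_lt hx))
    simp [hA, hB]

lemma prekopa_leindler_bounded {s t : ℝ} (hs : 0 < s) (ht : 0 < t) (hst : s + t = 1)
    {f g h : ℝ → ℝ≥0∞} (hf : Measurable f) (hg : Measurable g) (hh : Measurable h)
    (hf1 : ⨆ x, f x ≠ ∞) (hg1 : ⨆ x, g x ≠ ∞)
    (H : ∀ x y, f x ^ s * g y ^ t ≤ h (s * x + t * y)) :
    (∫⁻ x, f x) ^ s * (∫⁻ x, g x) ^ t ≤ ∫⁻ x, h x := by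
  set M := ⨆ x, f x with hM
  set N := ⨆ x, g x with hN
  rcases eq_or_ne M 0 with hM0 | hM0
  · have : ∀ x, f x = 0 := fun x => le_antisymm (hM0 ▸ le_iSup f x) zero_le
    simp [this, hs]
  rcases eq_or_ne N 0 with hN0 | hN0
  · have : ∀ x, g x = 0 := fun x => le_antisymm (hN0 ▸ le_iSup g x) zero_le
    simp [this, ht]
  have hc0 : M⁻¹ ^ s * N⁻¹ ^ t ≠ 0 := by simp [hM0, hN0, hf1, hg1, hs.not_gt, ht.not_gt]
  have hc1 : M⁻¹ ^ s * N⁻¹ ^ t ≠ ∞ :=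
    ENNReal.mul_ne_top (ENNReal.rpow_ne_top_of_nonneg hs.le (by simpa))
      (ENNReal.rpow_ne_top_of_nonneg ht.le (by simpa))
  have key := prekopa_leindler_normalized hs ht hst (hf.const_mul M⁻¹) (hg.const_mul N⁻¹)
    (hh.const_mul (M⁻¹ ^ s * N⁻¹ ^ t))
    (by rw [← ENNReal.mul_iSup, ← hM, ENNReal.inv_mul_cancel hM0 hf1])
    (by rw [← ENNReal.mul_iSup, ← hN, ENNReal.inv_mul_cancel hN0 hg1])
    (fun x y => by
      rw [ENNReal.mul_rpow_of_nonneg _ _ hs.le, ENNReal.mul_rpow_of_nonneg _ _ ht.le,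
        mul_mul_mul_comm]
      gcongr
      exact H x y)
  rw [lintegral_const_mul _ hf, lintegral_const_mul _ hg, lintegral_const_mul _ hh,
    ENNReal.mul_rpow_of_nonneg _ _ hs.le, ENNReal.mul_rpow_of_nonneg _ _ ht.le,
        mul_mul_mul_comm] at key
  exact (ENNReal.mul_le_mul_iff_right hc0 hc1).1 key

lemma tendsto_lintegral_min {f : ℝ → ℝ≥0∞} (hf : Measurable f) :
    Filter.Tendsto (fun k : ℕ => ∫⁻ x, min (f x) k) Filter.atTop (nhds (∫⁻ x, f x)) := by
  refine lintegral_tendsto_of_tendsto_of_monotone (fun k => (hf.min measurable_const).aemeasurable)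
    (Filter.Eventually.of_forall fun x => fun i j hij => ?_)
    (Filter.Eventually.of_forall fun x => ?_)
  · exact min_le_min le_rfl (by exact_mod_cast hij)
  · have := (tendsto_const_nhds (x := f x)).min ENNReal.tendsto_nat_nhds_top
    simpa using this

/-- The Prékopa–Leindler inequality on `ℝ`, reduced to bounded functions by truncation. -/
theorem prekopa_leindler_one {s t : ℝ} (hs : 0 < s) (ht : 0 < t) (hst : s + t = 1)
    {f g h : ℝ → ℝ≥0∞} (hf : Measurable f) (hg : Measurable g) (hh : Measurable h)
    (H : ∀ x y, f x ^ s * g y ^ t ≤ h (s * x + t * y)) :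
    (∫⁻ x, f x) ^ s * (∫⁻ x, g x) ^ t ≤ ∫⁻ x, h x := by
  rcases eq_or_ne (∫⁻ x, f x) 0 with hf0 | hf0
  · simp [hf0, hs]
  rcases eq_or_ne (∫⁻ x, g x) 0 with hg0 | hg0
  · simp [hg0, ht]
  have hlim := ENNReal.Tendsto.mul (((ENNReal.continuous_rpow_const (y := s)).tendsto _).comp
      (tendsto_lintegral_min hf)) (Or.inl (by simp [hf0, hs.not_gt, hs]))
    (((ENNReal.continuous_rpow_const (y := t)).tendsto _).comp (tendsto_lintegral_min hg))
    (Or.inl (by simp [hg0, ht.not_gt, ht]))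
  refine le_of_tendsto' hlim fun k => ?_
  refine prekopa_leindler_bounded hs ht hst (hf.min measurable_const) (hg.min measurable_const)
    hh ?_ ?_ fun x y => le_trans ?_ (H x y)
  · exact ((iSup_le fun x => min_le_right _ _).trans_lt (ENNReal.natCast_lt_top k)).ne
  · exact ((iSup_le fun x => min_le_right _ _).trans_lt (ENNReal.natCast_lt_top k)).ne
  · gcongr <;> exact min_le_left _ _

/-- The Prékopa–Leindler inequality on `ℝⁿ`. The marginals over the last `n` coordinates satisfy the
one-dimensional hypothesis by the inductive hypothesis. -/
theorem prekopa_leindler {s t : ℝ} (hs : 0 < s) (ht : 0 < t) (hst : s + t = 1) (n : ℕ)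
    {f g h : (Fin n → ℝ) → ℝ≥0∞} (hf : Measurable f) (hg : Measurable g) (hh : Measurable h)
    (H : ∀ x y, f x ^ s * g y ^ t ≤ h (s • x + t • y)) :
    (∫⁻ x, f x) ^ s * (∫⁻ x, g x) ^ t ≤ ∫⁻ x, h x := by
  induction n with
  | zero =>
    rw [Measure.volume_pi_eq_dirac 0, lintegral_dirac, lintegral_dirac, lintegral_dirac]
    simpa using H 0 0
  | succ n ih =>
    let e := (MeasurableEquiv.piFinSuccAbove (fun _ : Fin (n + 1) => ℝ) 0).symm
    have hmp : MeasurePreserving e volume volume :=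
      (volume_preserving_piFinSuccAbove (fun _ : Fin (n + 1) => ℝ) 0).symm _
    have he : ∀ a x, e (a, x) = Fin.cons a x := fun a x => by
      simp [e, MeasurableEquiv.piFinSuccAbove]
      rfl
    have hfub : ∀ u : (Fin (n + 1) → ℝ) → ℝ≥0∞, Measurable u →
        ∫⁻ x, u x = ∫⁻ a, ∫⁻ x, u (e (a, x)) := fun u hu => by
      rw [← hmp.lintegral_comp hu, Measure.volume_eq_prod,
        lintegral_prod (fun p => u (e p)) (hu.comp e.measurable).aemeasurable]
    have hmeas : ∀ u : (Fin (n + 1) → ℝ) → ℝ≥0∞, Measurable u →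
        Measurable fun a => ∫⁻ x, u (e (a, x)) := fun u hu =>
      (hu.comp e.measurable).lintegral_prod_right'
    rw [hfub f hf, hfub g hg, hfub h hh]
    refine prekopa_leindler_one hs ht hst (hmeas f hf) (hmeas g hg) (hmeas h hh) fun a b => ?_
    refine ih (hf.comp (e.measurable.comp measurable_prodMk_left))
      (hg.comp (e.measurable.comp measurable_prodMk_left))
      (hh.comp (e.measurable.comp measurable_prodMk_left)) fun x y => ?_
    refine (H _ _).trans_eq (congrArg h ?_)
    rw [he, he, he]
    ext i
    refine Fin.cases ?_ (fun j => ?_) i <;> simp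

/-- The multiplicative (dimension-free) Brunn–Minkowski inequality: Prékopa–Leindler for indicator
functions. -/
theorem brunn_minkowski {s t : ℝ} (hs : 0 < s) (ht : 0 < t) (hst : s + t = 1) {n : ℕ}
    {A B C : Set (EuclideanSpace ℝ (Fin n))} (hA : MeasurableSet A) (hB : MeasurableSet B)
    (hC : MeasurableSet C) (H : ∀ x ∈ A, ∀ y ∈ B, s • x + t • y ∈ C) :
    volume A ^ s * volume B ^ t ≤ volume C := by
  have hmp := PiLp.volume_preserving_toLp (Fin n)
  have hvol : ∀ S : Set (EuclideanSpace ℝ (Fin n)), MeasurableSet S →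
      volume S = ∫⁻ x, S.indicator 1 (WithLp.toLp 2 x) := fun S hS => by
    rw [hmp.lintegral_comp (measurable_one.indicator hS), lintegral_indicator_one hS]
  have hm : ∀ S : Set (EuclideanSpace ℝ (Fin n)), MeasurableSet S →
      Measurable fun x => S.indicator (1 : EuclideanSpace ℝ (Fin n) → ℝ≥0∞) (WithLp.toLp 2 x) :=
    fun S hS =>
    (measurable_one.indicator hS).comp hmp.measurable
  rw [hvol A hA, hvol B hB, hvol C hC]
  refine prekopa_leindler hs ht hst n (hm A hA) (hm B hB) (hm C hC) fun x y => ?_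
  by_cases hx : WithLp.toLp 2 x ∈ A
  · by_cases hy : WithLp.toLp 2 y ∈ B
    · have := H _ hx _ hy
      simp [hx, hy, this]
    · simp [hy, ht]
  · simp [hx, hs]

/-! ### Radial functions and support functions -/

/-- Integration in polar coordinates: a set which in every direction `u` reaches at most up to radius
`r u` has volume at most `∫ r(u)ⁿ / n du`. -/
lemma volume_le_lintegral_radial {n : ℕ} (hn : 0 < n) {U : Set (EuclideanSpace ℝ (Fin n))}
    {r : sphere (0 : EuclideanSpace ℝ (Fin n)) 1 → ℝ} (hr : Continuous r)
    (hr0 : ∀ u, 0 < r u)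
    (H : ∀ u : sphere (0 : EuclideanSpace ℝ (Fin n)) 1, ∀ ρ : ℝ, 0 < ρ →
      ρ • (u : EuclideanSpace ℝ (Fin n)) ∈ U → ρ < r u) :
    volume U ≤ ∫⁻ u, ENNReal.ofReal (r u ^ n / n)
      ∂(volume : Measure (EuclideanSpace ℝ (Fin n))).toSphere := by
  have : Nonempty (Fin n) := ⟨⟨0, hn⟩⟩
  let E := EuclideanSpace ℝ (Fin n)
  let S : Set (sphere (0 : E) 1 × Set.Ioi (0 : ℝ)) := {p | (p.2 : ℝ) < r p.1}
  have hS : MeasurableSet S :=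
    (isOpen_lt (by fun_prop) (by fun_prop)).measurableSet
  have hmp := (volume : Measure E).measurePreserving_homeomorphUnitSphereProd
  calc volume U = volume (U \ {0}) := (measure_sdiff_null (measure_singleton _)).symm
    _ = (volume : Measure E).comap (Subtype.val : ({0}ᶜ : Set E) → E) (Subtype.val ⁻¹' U) := by
        rw [comap_subtype_coe_apply (measurableSet_singleton _).compl,
          Subtype.image_preimage_coe, Set.inter_comm]
        rfl
    _ ≤ (volume : Measure E).comap (Subtype.val : ({0}ᶜ : Set E) → E)
          (homeomorphUnitSphereProd E ⁻¹' S) := by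
        refine measure_mono fun x hx => ?_
        have hx0 : 0 < ‖(x : E)‖ := norm_pos_iff.2 x.2
        have := H (homeomorphUnitSphereProd E x).1 ‖(x : E)‖ hx0 (by
          rw [homeomorphUnitSphereProd_apply_fst_coe, smul_inv_smul₀ hx0.ne']
          exact hx)
        simpa [S] using this
    _ = _ := by
        rw [hmp.measure_preimage hS.nullMeasurableSet, Measure.prod_apply hS]
        refine lintegral_congr fun u => ?_
        have : Prod.mk u ⁻¹' S = Set.Iio (⟨r u, hr0 u⟩ : Set.Ioi (0 : ℝ)) := rfl
        rw [this, Measure.volumeIoiPow_apply_Iio]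
        obtain ⟨m, rfl⟩ := Nat.exists_eq_succ_of_ne_zero hn.ne'
        have hE : Module.finrank ℝ E = m + 1 := finrank_euclideanSpace_fin
        simp [hE]

/-- The support function `u ↦ max_{x ∈ K} ⟪x, u⟫` of a set `K`; it is only meaningful for `K` nonempty
and bounded. -/
noncomputable def supportFn {n : ℕ} (K : Set (EuclideanSpace ℝ (Fin n)))
    (u : EuclideanSpace ℝ (Fin n)) : ℝ :=
  sSup ((fun x => ⟪x, u⟫) '' K)

lemma continuous_supportFn {n : ℕ} {K : Set (EuclideanSpace ℝ (Fin n))} (hK : IsCompact K) :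
    Continuous (supportFn K) :=
  hK.continuous_sSup (f := fun u x => ⟪x, u⟫)
    (by simp only [Function.HasUncurry.uncurry, id]; fun_prop)

lemma inner_le_supportFn {n : ℕ} {K : Set (EuclideanSpace ℝ (Fin n))} (hK : IsCompact K)
    {x : EuclideanSpace ℝ (Fin n)} (hx : x ∈ K) (u : EuclideanSpace ℝ (Fin n)) :
    ⟪x, u⟫ ≤ supportFn K u :=
  le_csSup (hK.image (by fun_prop)).bddAbove ⟨x, hx, rfl⟩

/-- If `K` has the volume of the unit ball `B`, then by Brunn–Minkowski so does, at least, `s B + t K`.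
The latter set reaches in direction `u` at most up to its support function `s + t h_K(u)`. -/
lemma volume_ball_le_lintegral {n : ℕ} (hn : 0 < n) {K : Set (EuclideanSpace ℝ (Fin n))}
    (hK : IsCompact K) (hvol : volume K = volume (ball (0 : EuclideanSpace ℝ (Fin n)) 1))
    {s t : ℝ} (hs : 0 < s) (ht : 0 < t) (hst : s + t = 1)
    (hpos : ∀ u : sphere (0 : EuclideanSpace ℝ (Fin n)) 1, 0 < s + t * supportFn K u) :
    volume (ball (0 : EuclideanSpace ℝ (Fin n)) 1) ≤
      ∫⁻ u : sphere (0 : EuclideanSpace ℝ (Fin n)) 1,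
        ENNReal.ofReal ((s + t * supportFn K u) ^ n / n)
        ∂(volume : Measure (EuclideanSpace ℝ (Fin n))).toSphere := by
  have hV0 : volume (ball (0 : EuclideanSpace ℝ (Fin n)) 1) ≠ 0 :=
    (measure_ball_pos _ _ one_pos).ne'
  have hV1 : volume (ball (0 : EuclideanSpace ℝ (Fin n)) 1) ≠ ∞ := measure_ball_lt_top.ne
  have hopen : IsOpen (s • ball (0 : EuclideanSpace ℝ (Fin n)) 1 + t • K) :=
    (isOpen_ball.smul₀ hs.ne').add_right
  have hbm := brunn_minkowski hs ht hst (A := ball (0 : EuclideanSpace ℝ (Fin n)) 1) (B := K)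
    measurableSet_ball hK.measurableSet hopen.measurableSet
    (fun x hx y hy => Set.add_mem_add (Set.smul_mem_smul_set hx) (Set.smul_mem_smul_set hy))
  rw [hvol, ← ENNReal.rpow_add _ _ hV0 hV1, hst, ENNReal.rpow_one] at hbm
  refine hbm.trans (volume_le_lintegral_radial hn ?_ hpos ?_)
  · have := continuous_supportFn hK
    fun_prop
  · rintro u ρ hρ ⟨_, ⟨x, hx, rfl⟩, _, ⟨y, hy, rfl⟩, hxy⟩
    have hu : ‖(u : EuclideanSpace ℝ (Fin n))‖ = 1 := by simp
    have h1 : ⟪x, (u : EuclideanSpace ℝ (Fin n))⟫ < 1 :=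
      (real_inner_le_norm _ _).trans_lt (by simpa [hu] using hx)
    have h2 := inner_le_supportFn hK hy (u : EuclideanSpace ℝ (Fin n))
    have h3 : ρ = s * ⟪x, (u : EuclideanSpace ℝ (Fin n))⟫
        + t * ⟪y, (u : EuclideanSpace ℝ (Fin n))⟫ := by
      have := congrArg (fun z => ⟪z, (u : EuclideanSpace ℝ (Fin n))⟫) hxy
      simp only [inner_add_left, real_inner_smul_left, real_inner_self_eq_norm_sq, hu] at this
      linarith
    rw [h3]
    have := mul_lt_mul_of_pos_left h1 hs
    have := mul_le_mul_of_nonneg_left h2 ht.le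
    linarith

lemma one_add_pow_le {n : ℕ} {x : ℝ} (hx : 0 ≤ 1 + x) (hx1 : |n * x| ≤ 1) :
    (1 + x) ^ n ≤ 1 + n * x + (n * x) ^ 2 := by
  have h1 : (1 + x) ^ n ≤ Real.exp (n * x) := by
    rw [Real.exp_nat_mul]
    exact pow_le_pow_left₀ hx (by linarith [Real.add_one_le_exp x]) n
  have := (abs_le.1 (Real.abs_exp_sub_one_sub_id_le hx1)).2
  linarith

/-- The derivative at `t = 0` of `volume_ball_le_lintegral`, applied with `s = 1 - t`. -/
lemma volume_le_integral_supportFn {n : ℕ} (hn : 0 < n) {K : Set (EuclideanSpace ℝ (Fin n))}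
    (hK : IsCompact K) (hvol : volume K = volume (ball (0 : EuclideanSpace ℝ (Fin n)) 1)) :
    n * volume.real (ball (0 : EuclideanSpace ℝ (Fin n)) 1) ≤
      ∫ u : sphere (0 : EuclideanSpace ℝ (Fin n)) 1, supportFn K u
        ∂(volume : Measure (EuclideanSpace ℝ (Fin n))).toSphere := by
  have hn' : (0 : ℝ) < n := by exact_mod_cast hn
  let E := EuclideanSpace ℝ (Fin n)
  set ω := (volume : Measure E).toSphere with hω
  set V := volume.real (ball (0 : E) 1) with hV
  have hV0 : 0 ≤ V := measureReal_nonneg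
  have hωV : ω.real Set.univ = n * V := by
    rw [hω, Measure.toSphere_real_apply_univ, finrank_euclideanSpace_fin]
  let h : sphere (0 : E) 1 → ℝ := fun u => supportFn K u
  have hc : Continuous h := (continuous_supportFn hK).comp continuous_subtype_val
  have hint : ∀ F : sphere (0 : E) 1 → ℝ, Continuous F → Integrable F ω := fun F hF =>
    hF.integrable_of_hasCompactSupport (HasCompactSupport.of_compactSpace F)
  obtain ⟨M₀, hM₀⟩ := (isCompact_univ (X := sphere (0 : E) 1)).exists_bound_of_continuousOn
    (f := fun u => h u - 1) (by fun_prop)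
  let M := max M₀ 1
  have hM1 : 1 ≤ M := le_max_right _ _
  have hM : ∀ u, |h u - 1| ≤ M := fun u => (hM₀ u trivial).trans (le_max_left _ _)
  -- First-order expansion of the radial volume bound at `t = 0`.
  have key : ∀ t : ℝ, 0 < t → t < 1 → n * t * M ≤ 1 → t * M < 1 →
      n * V - ∫ u, h u ∂ω ≤ t * (n ^ 2 * M ^ 2 * V) := by
    intro t ht ht1 htM htM'
    have hb : ∀ u, |t * (h u - 1)| ≤ t * M := fun u => by
      rw [abs_mul, abs_of_pos ht]
      exact mul_le_mul_of_nonneg_left (hM u) ht.le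
    have h1 := volume_ball_le_lintegral hn hK hvol (s := 1 - t) (t := t) (by linarith) ht
      (by ring) (fun u => by
        have := (abs_le.1 (hb u)).1
        simp only [h] at this
        linarith)
    have h2 : ∀ u : sphere (0 : E) 1, (1 - t + t * supportFn K u) ^ n / n ≤
        (1 + n * t * (h u - 1) + (n * t * M) ^ 2) / n := fun u => by
      have e1 : 1 - t + t * supportFn K u = 1 + t * (h u - 1) := by simp only [h]; ring
      have hbu := hb u
      have e2 : |n * (t * (h u - 1))| ≤ n * t * M := by
        rw [abs_mul, abs_of_pos hn', mul_assoc]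
        exact mul_le_mul_of_nonneg_left hbu hn'.le
      rw [e1]
      refine div_le_div_of_nonneg_right ?_ hn'.le
      refine (one_add_pow_le (by linarith [(abs_le.1 hbu).1]) (e2.trans htM)).trans ?_
      have := sq_le_sq' (abs_le.1 e2).1 (abs_le.1 e2).2
      linarith
    have h3 : volume (ball (0 : E) 1) ≤
        ENNReal.ofReal (∫ u, (1 + n * t * (h u - 1) + (n * t * M) ^ 2) / n ∂ω) := by
      rw [ofReal_integral_eq_lintegral_ofReal (hint _ (by fun_prop))]
      · exact h1.trans (lintegral_mono fun u => ENNReal.ofReal_le_ofReal (h2 u))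
      · refine Filter.Eventually.of_forall fun u => div_nonneg ?_ hn'.le
        have hbu := (abs_le.1 (hb u)).1
        have := mul_le_mul_of_nonneg_left hbu hn'.le
        nlinarith [sq_nonneg (n * t * M)]
    have h4 : ∫ u, (1 + n * t * (h u - 1) + (n * t * M) ^ 2) / n ∂ω =
        V + t * (∫ u, h u ∂ω - n * V) + (n * t * M) ^ 2 * V := by
      have e : ∀ u, (1 + n * t * (h u - 1) + (n * t * M) ^ 2) / n =
          (1 / n - t + (n * t * M) ^ 2 / n) + t * h u := fun u => by field_simp; ring
      simp only [e]
      rw [integral_add (integrable_const _) (hint _ (by fun_prop)), integral_const,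
        integral_const_mul, hωV, smul_eq_mul]
      field_simp
      ring
    have h5 : V ≤ V + t * (∫ u, h u ∂ω - n * V) + (n * t * M) ^ 2 * V := by
      rw [← h4]
      by_contra hlt
      push Not at hlt
      have hVp : 0 < V := by
        rw [hV]; exact ENNReal.toReal_pos (measure_ball_pos _ _ one_pos).ne' measure_ball_lt_top.ne
      have : ENNReal.ofReal V ≤ _ := (ENNReal.ofReal_toReal measure_ball_lt_top.ne).trans_le h3
      exact absurd this (not_le.2 ((ENNReal.ofReal_lt_ofReal_iff hVp).2 hlt))
    have h6 : t * (n * V - ∫ u, h u ∂ω) ≤ t * (t * (n ^ 2 * M ^ 2 * V)) := by nlinarith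
    exact le_of_mul_le_mul_left h6 ht
  have hev : ∀ᶠ t in nhdsWithin (0 : ℝ) (Set.Ioi 0),
      n * V - ∫ u, h u ∂ω ≤ t * (n ^ 2 * M ^ 2 * V) := by
    have hlim : ∀ c : ℝ, Filter.Tendsto (fun t : ℝ => t * c) (nhdsWithin 0 (Set.Ioi 0)) (nhds 0) :=
      fun c => by
        have : Continuous fun t : ℝ => t * c := by fun_prop
        simpa using (this.tendsto 0).mono_left nhdsWithin_le_nhds
    filter_upwards [self_mem_nhdsWithin, (hlim 1).eventually_lt_const one_pos,
      (hlim M).eventually_lt_const one_pos, (hlim (n * M)).eventually_lt_const one_pos]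
      with t h0 h1 h2 h3
    exact key t h0 (by linarith) (by linarith) h2
  have hlim : Filter.Tendsto (fun t : ℝ => t * (n ^ 2 * M ^ 2 * V)) (nhdsWithin 0 (Set.Ioi 0))
      (nhds 0) := by
    have : Continuous fun t : ℝ => t * (n ^ 2 * M ^ 2 * V) := by fun_prop
    simpa using (this.tendsto 0).mono_left nhdsWithin_le_nhds
  have := ge_of_tendsto hlim hev
  exact sub_nonpos.1 this

lemma one_le_meanWidth {n : ℕ} (hn : 0 < n) {K : Set (EuclideanSpace ℝ (Fin n))}
    (hK : IsCompact K) (hvol : volume K = volume (ball (0 : EuclideanSpace ℝ (Fin n)) 1)) :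
    1 ≤ meanWidth K := by
  have h := volume_le_integral_supportFn hn hK hvol
  have hpos : 0 < n * volume.real (ball (0 : EuclideanSpace ℝ (Fin n)) 1) :=
    mul_pos (by exact_mod_cast hn)
      (ENNReal.toReal_pos (measure_ball_pos _ _ one_pos).ne' measure_ball_lt_top.ne)
  rw [meanWidth, sphereUniform, integral_smul_measure, ENNReal.toReal_inv, smul_eq_mul,
    ← measureReal_def, Measure.toSphere_real_apply_univ, finrank_euclideanSpace_fin,
    inv_mul_eq_div, one_le_div hpos]
  exact h

lemma meanWidth_smul {n : ℕ} {c : ℝ} (hc : 0 ≤ c) (K : Set (EuclideanSpace ℝ (Fin n))) :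
    meanWidth (c • K) = c * meanWidth K := by
  rw [meanWidth, meanWidth, ← integral_const_mul]
  congr 1 with u
  rw [← smul_eq_mul, ← Real.sSup_smul_of_nonneg hc, ← Set.image_smul, Set.image_image,
    ← Set.image_smul, Set.image_image]
  simp only [real_inner_smul_left, smul_eq_mul]

/-- **Urysohn inequality.** For every convex body `K ⊆ ℝ^n`,
`vrad(K) ≤ w(K)`. -/
theorem urysohn_inequality (n : ℕ) (hn : 0 < n)
    (K : Set (EuclideanSpace ℝ (Fin n)))
    (hKcompact : IsCompact K) (hKconv : Convex ℝ K) (hKint : (interior K).Nonempty) :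
    volRad K ≤ meanWidth K := by
  have hK0 : volume K ≠ 0 := (Measure.measure_pos_of_nonempty_interior _ hKint).ne'
  have hK1 : volume K ≠ ∞ := hKcompact.measure_lt_top.ne
  have hV0 : volume (ball (0 : EuclideanSpace ℝ (Fin n)) 1) ≠ 0 :=
    (measure_ball_pos _ _ one_pos).ne'
  have hV1 : volume (ball (0 : EuclideanSpace ℝ (Fin n)) 1) ≠ ∞ := measure_ball_lt_top.ne
  have hKp := ENNReal.toReal_pos hK0 hK1
  have hVp := ENNReal.toReal_pos hV0 hV1
  have hpos : 0 < volRad K := Real.rpow_pos_of_pos (div_pos hKp hVp) _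
  have hpow : volRad K ^ n = (volume K).toReal /
      (volume (ball (0 : EuclideanSpace ℝ (Fin n)) 1)).toReal :=
    Real.rpow_inv_natCast_pow (div_pos hKp hVp).le hn.ne'
  have h := one_le_meanWidth hn (hKcompact.smul (volRad K)⁻¹) (by
    rw [Measure.addHaar_smul_of_nonneg _ (inv_nonneg.2 hpos.le), finrank_euclideanSpace_fin,
      inv_pow, hpow, inv_div, ENNReal.ofReal_div_of_pos hKp, ENNReal.ofReal_toReal hV1,
      ENNReal.ofReal_toReal hK1, ENNReal.div_mul_cancel hK0 hK1])
  rwa [meanWidth_smul (inv_nonneg.2 hpos.le), inv_mul_eq_div, one_le_div hpos] at h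
end

section
/- Let v_1, …, v_N be points in ℝ^n with ‖v_i‖ ≤ λ for every 1 ≤ i ≤ N. Then the mean width of their convex hull satisfies w(conv(v_1, …, v_N)) ≤ λ √(2 ln N / n). -/
/-!
The maximum of the `⟪v i, u⟫` is controlled by their exponential moments: for `t > 0`,
the mean width `W` satisfies
`t * W ≤ log (∑ i, ∫ exp (t ⟪v i, u⟫) dσ(u))`, and optimizing over `t` gives the claim as soon as
the uniform measure `σ` on the sphere is sub-Gaussian with variance proxy `1 / n`, that is
`∫ exp ⟪w, u⟫ dσ(u) ≤ exp (‖w‖² / (2n))` (`integral_exp_toSphere_le`).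

This bound comes from the Gaussian vector `x = r • u` in `ℝ^n` with covariance `n⁻¹ • 1`. Here `u` has
law `σ`, `r` is independent of `u`, and `𝔼 r² = 1` (`radial_second_moment`). By symmetry
`𝔼 exp ⟪w, u⟫ = 𝔼 cosh ⟪w, u⟫`. As `cosh (√y c)` is convex in `y` (`cosh_tangent`), Jensen's inequality
in `y = r²` gives
`𝔼 cosh ⟪w, u⟫ ≤ 𝔼 cosh (r ⟪w, u⟫) = 𝔼 exp ⟪w, x⟫ = exp (‖w‖² / (2n))`.
-/

open MeasureTheory Metric
open scoped RealInnerProductSpace Pointwise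

/-! ### The tangent inequality for `cosh` -/

/-- The tangent line inequality at `s ^ 2 = 1` for the convex function `y ↦ cosh (√y c)` of
`y = s ^ 2`. Termwise in the power series of `cosh` it is Bernoulli's inequality. -/
lemma cosh_tangent (c s : ℝ) :
    Real.cosh c + (s ^ 2 - 1) * (c * Real.sinh c / 2) ≤ Real.cosh (s * c) := by
  have h1 := Real.hasSum_cosh c
  have h2 := Real.hasSum_cosh (s * c)
  have h3 : HasSum (fun k : ℕ => k * c ^ (2 * k) / ((2 * k).factorial : ℝ))
      (c * Real.sinh c / 2) := by
    have h := (Real.hasSum_sinh c).mul_left (c / 2)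
    rw [← hasSum_nat_add_iff' 1]
    have hz : c * Real.sinh c / 2 - ∑ i ∈ Finset.range 1,
        (i : ℝ) * c ^ (2 * i) / ((2 * i).factorial : ℝ) = c / 2 * Real.sinh c := by
      simp
      ring
    rw [hz]
    refine h.congr_fun fun k => ?_
    rw [show 2 * (k + 1) = (2 * k + 1) + 1 by ring, Nat.factorial_succ]
    push_cast
    have : ((2 * k + 1).factorial : ℝ) ≠ 0 := by positivity
    have : (2 * (k : ℝ) + 1 + 1) ≠ 0 := by positivity
    field_simp
    ring
  refine hasSum_le (fun k => ?_) (h1.add (h3.mul_left (s ^ 2 - 1))) h2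
  have hb : 1 + (k : ℝ) * (s ^ 2 - 1) ≤ (1 + (s ^ 2 - 1)) ^ k :=
    one_add_mul_le_pow (by nlinarith [sq_nonneg s]) k
  have hc : 0 ≤ c ^ (2 * k) / ((2 * k).factorial : ℝ) := by
    rw [pow_mul]; positivity
  calc _ = (1 + (k : ℝ) * (s ^ 2 - 1)) * (c ^ (2 * k) / ((2 * k).factorial : ℝ)) := by ring
    _ ≤ (1 + (s ^ 2 - 1)) ^ k * (c ^ (2 * k) / ((2 * k).factorial : ℝ)) := by gcongr
    _ = _ := by rw [mul_pow, pow_mul s, add_sub_cancel]; ring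

/-! ### Polar coordinates and Gaussian integrals -/

section Polar

variable {n : ℕ}

local notation "E" => EuclideanSpace ℝ (Fin n)

/-- Integration in polar coordinates `x = r • u`. -/
lemma integral_polar [Nontrivial E] (g : E → ℝ) :
    ∫ x, g x = ∫ p, g ((p.2 : ℝ) • (p.1 : E))
      ∂((volume : Measure E).toSphere.prod (Measure.volumeIoiPow (Module.finrank ℝ E - 1))) := by
  rw [← (volume : Measure E).measurePreserving_homeomorphUnitSphereProd.integral_comp
    (Homeomorph.measurableEmbedding _)]
  have h := integral_subtype_comap (μ := volume) (measurableSet_singleton (0 : E)).compl g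
  rw [restrict_compl_singleton] at h
  rw [← h]
  refine integral_congr_ae (.of_forall fun x => ?_)
  have : (x : E) ≠ 0 := x.2
  simp [smul_smul, this]

lemma integrable_polar [Nontrivial E] {g : E → ℝ} (hg : Integrable g) :
    Integrable (fun p : sphere (0 : E) 1 × Set.Ioi (0 : ℝ) => g ((p.2 : ℝ) • (p.1 : E)))
      ((volume : Measure E).toSphere.prod (Measure.volumeIoiPow (Module.finrank ℝ E - 1))) := by
  rw [← (volume : Measure E).measurePreserving_homeomorphUnitSphereProd.integrable_comp_emb
    (Homeomorph.measurableEmbedding _)]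
  rw [← restrict_compl_singleton (μ := (volume : Measure E)) 0, ← IntegrableOn,
    integrableOn_iff_comap_subtypeVal (measurableSet_singleton _).compl] at hg
  refine hg.congr (.of_forall fun x => ?_)
  have : (x : E) ≠ 0 := x.2
  simp [smul_smul, this]

lemma integrable_volumeIoiPow {m : ℕ} {f : ℝ → ℝ}
    (hf : IntegrableOn (fun y : ℝ => y ^ m * f y) (Set.Ioi 0)) :
    Integrable (fun r : Set.Ioi (0 : ℝ) => f r) (Measure.volumeIoiPow m) := by
  rw [integrableOn_iff_comap_subtypeVal measurableSet_Ioi] at hf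
  rw [Measure.volumeIoiPow, integrable_withDensity_iff_integrable_smul' (by fun_prop) (by simp)]
  refine hf.congr (.of_forall ?_)
  rintro ⟨x, hx : 0 < x⟩
  simp (disch := positivity) [ENNReal.toReal_ofReal]

lemma integral_volumeIoiPow (m : ℕ) (f : ℝ → ℝ) :
    ∫ r : Set.Ioi (0 : ℝ), f r ∂(Measure.volumeIoiPow m)
      = ∫ y in Set.Ioi (0 : ℝ), y ^ m * f y := by
  simp only [Measure.volumeIoiPow, ENNReal.ofReal]
  rw [integral_withDensity_eq_integral_smul,
    integral_subtype_comap measurableSet_Ioi fun a ↦ Real.toNNReal (a ^ m) • f a,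
    setIntegral_congr_fun measurableSet_Ioi fun x hx ↦ ?_]
  · simp only [NNReal.smul_def, Real.coe_toNNReal _ (pow_nonneg (le_of_lt hx) m), smul_eq_mul]
  · exact (measurable_subtype_coe.pow_const _).real_toNNReal

lemma integrable_pow_mul_gaussian {b : ℝ} (hb : 0 < b) (m : ℕ) :
    IntegrableOn (fun y : ℝ => y ^ m * Real.exp (-b * y ^ 2)) (Set.Ioi 0) := by
  have h := integrableOn_rpow_mul_exp_neg_mul_sq hb (s := m) (by
    have : (0 : ℝ) ≤ m := by positivity
    linarith)
  simpa [Real.rpow_natCast] using h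

lemma integral_pow_mul_gaussian {b : ℝ} (hb : 0 < b) (m : ℕ) :
    ∫ y in Set.Ioi (0 : ℝ), y ^ m * Real.exp (-b * y ^ 2)
      = b ^ (-((m : ℝ) + 1) / 2) * (1 / 2) * Real.Gamma (((m : ℝ) + 1) / 2) := by
  have h := integral_rpow_mul_exp_neg_mul_rpow (p := 2) (q := m) (b := b) (by norm_num) (by
    have : (0 : ℝ) ≤ m := by positivity
    linarith) hb
  rw [← h]
  simp [Real.rpow_natCast]

/-- In dimension `m + 1`, the Gaussian weight `exp (-(m + 1) r ^ 2 / 2)` is normalized so that the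
squared radius has mean `1`. -/
lemma radial_second_moment {m : ℕ} :
    ∫ r : Set.Ioi (0 : ℝ), ((r : ℝ) ^ 2 - 1) * Real.exp (-(((m + 1 : ℕ) : ℝ) / 2) * (r : ℝ) ^ 2)
      ∂(Measure.volumeIoiPow m) = 0 := by
  have hb : (0 : ℝ) < ((m + 1 : ℕ) : ℝ) / 2 := by positivity
  rw [integral_volumeIoiPow m
    (fun y => (y ^ 2 - 1) * Real.exp (-(((m + 1 : ℕ) : ℝ) / 2) * y ^ 2))]
  have : ∀ y : ℝ, y ^ m * ((y ^ 2 - 1) * Real.exp (-(((m + 1 : ℕ) : ℝ) / 2) * y ^ 2))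
      = y ^ (m + 2) * Real.exp (-(((m + 1 : ℕ) : ℝ) / 2) * y ^ 2)
        - y ^ m * Real.exp (-(((m + 1 : ℕ) : ℝ) / 2) * y ^ 2) := fun y => by ring
  simp only [this]
  rw [integral_sub (integrable_pow_mul_gaussian hb _) (integrable_pow_mul_gaussian hb _),
    integral_pow_mul_gaussian hb, integral_pow_mul_gaussian hb]
  have hm : (0 : ℝ) < ((m : ℝ) + 1) / 2 := by positivity
  have e1 : (((m + 2 : ℕ) : ℝ) + 1) / 2 = ((m : ℝ) + 1) / 2 + 1 := by push_cast; ring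
  have e2 : -(((m + 2 : ℕ) : ℝ) + 1) / 2 = -((m : ℝ) + 1) / 2 - 1 := by push_cast; ring
  have e3 : ((m + 1 : ℕ) : ℝ) / 2 = ((m : ℝ) + 1) / 2 := by push_cast; ring
  rw [e1, e2, e3, Real.Gamma_add_one hm.ne', Real.rpow_sub_one hm.ne']
  field_simp
  ring

lemma integrable_gaussian_exp {b : ℝ} (hb : 0 < b) (w : E) :
    Integrable (fun x : E => Real.exp (-b * ‖x‖ ^ 2 + ⟪w, x⟫)) := by
  have h := (GaussianFourier.integrable_cexp_neg_mul_sq_norm_add (b := (b : ℂ))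
    (by simpa using hb) 1 w).re
  refine h.congr (.of_forall fun x => ?_)
  simp only [one_mul]
  rw [← Complex.ofReal_re (Real.exp _)]
  push_cast
  rfl

lemma integral_gaussian_exp {b : ℝ} (hb : 0 < b) (w : E) :
    ∫ x : E, Real.exp (-b * ‖x‖ ^ 2 + ⟪w, x⟫)
      = (Real.pi / b) ^ ((n : ℝ) / 2) * Real.exp (‖w‖ ^ 2 / (4 * b)) := by
  have h := GaussianFourier.integral_cexp_neg_mul_sq_norm_add (b := (b : ℂ))
    (by simpa using hb) 1 w
  have hp : 0 ≤ Real.pi / b := by positivity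
  rw [finrank_euclideanSpace_fin] at h
  apply Complex.ofReal_injective
  rw [← integral_complex_ofReal]
  push_cast [Complex.ofReal_cpow hp]
  simpa using h

lemma integrable_toSphere {f : E → ℝ} (hf : Continuous f) :
    Integrable (fun u : sphere (0 : E) 1 => f u) (volume : Measure E).toSphere := by
  have h : Continuous fun u : sphere (0 : E) 1 => f u := hf.comp continuous_subtype_val
  exact h.integrable_of_hasCompactSupport (HasCompactSupport.of_compactSpace _)

lemma radial_mass_pos (hn : 0 < n) :
    0 < ∫ r : Set.Ioi (0 : ℝ), Real.exp (-((n : ℝ) / 2) * (r : ℝ) ^ 2)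
      ∂(Measure.volumeIoiPow (n - 1)) := by
  have hb : (0 : ℝ) < (n : ℝ) / 2 := by positivity
  rw [integral_volumeIoiPow (n - 1) (fun y => Real.exp (-((n : ℝ) / 2) * y ^ 2)),
    integral_pow_mul_gaussian hb]
  have : 0 < Real.Gamma ((((n - 1 : ℕ) : ℝ) + 1) / 2) := Real.Gamma_pos_of_pos (by positivity)
  positivity

/-- The integrand is odd, and the sphere measure is invariant under `u ↦ -u`; the latter is read off
from the invariance of Lebesgue measure through polar coordinates. -/
lemma integral_sinh_toSphere (hn : 0 < n) (w : E) :
    ∫ u : sphere (0 : E) 1, Real.sinh ⟪w, (u : E)⟫ ∂(volume : Measure E).toSphere = 0 := by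
  have : Nonempty (Fin n) := ⟨⟨0, hn⟩⟩
  have h0 : ∫ x : E, Real.sinh ⟪w, ‖x‖⁻¹ • x⟫ * Real.exp (-((n : ℝ) / 2) * ‖x‖ ^ 2) = 0 := by
    have h := integral_neg_eq_self
      (fun x : E => Real.sinh ⟪w, ‖x‖⁻¹ • x⟫ * Real.exp (-((n : ℝ) / 2) * ‖x‖ ^ 2)) volume
    simp only [norm_neg, smul_neg, inner_neg_right, Real.sinh_neg, neg_mul, integral_neg] at h
    simp only [neg_mul]
    linarith
  rw [integral_polar, finrank_euclideanSpace_fin] at h0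
  have h1 : ∀ p : sphere (0 : E) 1 × Set.Ioi (0 : ℝ), ‖(p.2 : ℝ) • (p.1 : E)‖ = p.2 := fun p => by
    rw [norm_smul, norm_eq_of_mem_sphere, mul_one, Real.norm_of_nonneg (le_of_lt p.2.2)]
  have h2 : ∀ p : sphere (0 : E) 1 × Set.Ioi (0 : ℝ),
      (p.2 : ℝ)⁻¹ • (p.2 : ℝ) • (p.1 : E) = p.1 := fun p =>
    inv_smul_smul₀ (ne_of_gt p.2.2) _
  simp only [h1, h2] at h0
  rw [integral_prod_mul (fun u : sphere (0 : E) 1 => Real.sinh ⟪w, (u : E)⟫)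
    (fun r : Set.Ioi (0 : ℝ) => Real.exp (-((n : ℝ) / 2) * (r : ℝ) ^ 2))] at h0
  exact (mul_eq_zero.1 h0).resolve_right (radial_mass_pos hn).ne'

/-- The moment generating function of the centered Gaussian of covariance `n⁻¹ • 1`, unnormalized and
in polar coordinates; the normalizing constant is the product of the total masses of the angular and
radial parts. -/
lemma integral_gaussian_exp_polar (hn : 0 < n) (w : E) :
    ∫ p, Real.exp ((p.2 : ℝ) * ⟪w, (p.1 : E)⟫) * Real.exp (-((n : ℝ) / 2) * (p.2 : ℝ) ^ 2)
      ∂((volume : Measure E).toSphere.prod (Measure.volumeIoiPow (n - 1)))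
    = (volume : Measure E).toSphere.real Set.univ
      * (∫ r : Set.Ioi (0 : ℝ), Real.exp (-((n : ℝ) / 2) * (r : ℝ) ^ 2)
          ∂(Measure.volumeIoiPow (n - 1)))
      * Real.exp (‖w‖ ^ 2 / (2 * n)) ∧
    Integrable (fun p : sphere (0 : E) 1 × Set.Ioi (0 : ℝ) =>
      Real.exp ((p.2 : ℝ) * ⟪w, (p.1 : E)⟫) * Real.exp (-((n : ℝ) / 2) * (p.2 : ℝ) ^ 2))
      ((volume : Measure E).toSphere.prod (Measure.volumeIoiPow (n - 1))) := by
  have : Nonempty (Fin n) := ⟨⟨0, hn⟩⟩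
  have hb : (0 : ℝ) < (n : ℝ) / 2 := by positivity
  have h1 : ∀ p : sphere (0 : E) 1 × Set.Ioi (0 : ℝ), ‖(p.2 : ℝ) • (p.1 : E)‖ = p.2 := fun p => by
    rw [norm_smul, norm_eq_of_mem_sphere, mul_one, Real.norm_of_nonneg (le_of_lt p.2.2)]
  have key : ∀ (w : E) (p : sphere (0 : E) 1 × Set.Ioi (0 : ℝ)),
      Real.exp (-((n : ℝ) / 2) * ‖(p.2 : ℝ) • (p.1 : E)‖ ^ 2 + ⟪w, (p.2 : ℝ) • (p.1 : E)⟫)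
      = Real.exp ((p.2 : ℝ) * ⟪w, (p.1 : E)⟫) * Real.exp (-((n : ℝ) / 2) * (p.2 : ℝ) ^ 2) := by
    intro w p
    rw [h1, real_inner_smul_right, Real.exp_add, mul_comm]
  have hint : ∀ w : E, ∫ p, Real.exp ((p.2 : ℝ) * ⟪w, (p.1 : E)⟫)
        * Real.exp (-((n : ℝ) / 2) * (p.2 : ℝ) ^ 2)
        ∂((volume : Measure E).toSphere.prod (Measure.volumeIoiPow (n - 1)))
      = (Real.pi / ((n : ℝ) / 2)) ^ ((n : ℝ) / 2) * Real.exp (‖w‖ ^ 2 / (4 * ((n : ℝ) / 2))) := by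
    intro w
    rw [← integral_gaussian_exp hb w, integral_polar, finrank_euclideanSpace_fin]
    simp only [key]
  constructor
  · have h0 := hint 0
    simp only [inner_zero_left, mul_zero, Real.exp_zero, norm_zero] at h0
    rw [integral_prod_mul (fun _ : sphere (0 : E) 1 => (1 : ℝ))
      (fun r : Set.Ioi (0 : ℝ) => Real.exp (-((n : ℝ) / 2) * (r : ℝ) ^ 2))] at h0
    simp only [integral_const, smul_eq_mul, mul_one, ne_eq, OfNat.ofNat_ne_zero,
      not_false_eq_true, zero_pow, zero_div, Real.exp_zero] at h0
    rw [hint w, h0]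
    congr 3
    ring
  · have h := integrable_polar (integrable_gaussian_exp hb w)
    rw [finrank_euclideanSpace_fin] at h
    simpa only [key] using h

/-- The sphere measure is sub-Gaussian with variance proxy `1 / n`. For `x = r • u` Gaussian with
`𝔼 r ^ 2 = 1`, averaging the tangent inequality for `cosh (r ⟪w, u⟫)` over the independent `r` and
`u` bounds the spherical integral by the Gaussian one. -/
lemma integral_exp_toSphere_le (hn : 0 < n) (w : E) :
    ∫ u : sphere (0 : E) 1, Real.exp ⟪w, (u : E)⟫ ∂(volume : Measure E).toSphere
      ≤ (volume : Measure E).toSphere.real Set.univ * Real.exp (‖w‖ ^ 2 / (2 * n)) := by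
  set S := (volume : Measure E).toSphere with hS
  set V := Measure.volumeIoiPow (n - 1) with hV
  set ρ : Set.Ioi (0 : ℝ) → ℝ := fun r => Real.exp (-((n : ℝ) / 2) * (r : ℝ) ^ 2) with hρ
  have hb : (0 : ℝ) < (n : ℝ) / 2 := by positivity
  have hA : 0 < ∫ r, ρ r ∂V := radial_mass_pos hn
  obtain ⟨e1, i1⟩ := integral_gaussian_exp_polar hn w
  obtain ⟨e2, i2⟩ := integral_gaussian_exp_polar hn (-w)
  simp only [inner_neg_left, mul_neg, norm_neg] at e2 i2
  have icosh : Integrable (fun u : sphere (0 : E) 1 => Real.cosh ⟪w, (u : E)⟫) S :=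
    integrable_toSphere (f := fun u => Real.cosh ⟪w, u⟫) (by fun_prop)
  have isinh : Integrable (fun u : sphere (0 : E) 1 => Real.sinh ⟪w, (u : E)⟫) S :=
    integrable_toSphere (f := fun u => Real.sinh ⟪w, u⟫) (by fun_prop)
  have ig : Integrable (fun u : sphere (0 : E) 1 => ⟪w, (u : E)⟫ * Real.sinh ⟪w, (u : E)⟫ / 2) S :=
    integrable_toSphere (f := fun u => ⟪w, u⟫ * Real.sinh ⟪w, u⟫ / 2) (by fun_prop)
  have iρ : Integrable ρ V :=
    integrable_volumeIoiPow (f := fun y => Real.exp (-((n : ℝ) / 2) * y ^ 2))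
      (integrable_pow_mul_gaussian hb _)
  have iρ2 : Integrable (fun r : Set.Ioi (0 : ℝ) => ((r : ℝ) ^ 2 - 1) * ρ r) V := by
    refine integrable_volumeIoiPow
      (f := fun y => (y ^ 2 - 1) * Real.exp (-((n : ℝ) / 2) * y ^ 2)) ?_
    refine ((integrable_pow_mul_gaussian hb (n - 1 + 2)).sub
      (integrable_pow_mul_gaussian hb (n - 1))).congr (.of_forall fun y => ?_)
    simp only [Pi.sub_apply]
    ring
  have zρ2 : ∫ r : Set.Ioi (0 : ℝ), ((r : ℝ) ^ 2 - 1) * ρ r ∂V = 0 := by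
    obtain ⟨m, rfl⟩ : ∃ m, n = m + 1 := ⟨n - 1, by omega⟩
    exact radial_second_moment
  have hle : ∫ p, (Real.cosh ⟪w, (p.1 : E)⟫ * ρ p.2
        + ⟪w, (p.1 : E)⟫ * Real.sinh ⟪w, (p.1 : E)⟫ / 2 * (((p.2 : ℝ) ^ 2 - 1) * ρ p.2)) ∂(S.prod V)
      ≤ ∫ p, (Real.exp ((p.2 : ℝ) * ⟪w, (p.1 : E)⟫) * ρ p.2
        + Real.exp (-((p.2 : ℝ) * ⟪w, (p.1 : E)⟫)) * ρ p.2) / 2 ∂(S.prod V) := by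
    refine integral_mono ((icosh.mul_prod iρ).add (ig.mul_prod iρ2)) ((i1.add i2).div_const 2) ?_
    intro p
    have h := mul_le_mul_of_nonneg_right (cosh_tangent ⟪w, (p.1 : E)⟫ (p.2 : ℝ))
      (Real.exp_pos (-((n : ℝ) / 2) * (p.2 : ℝ) ^ 2)).le
    rw [Real.cosh_eq ((p.2 : ℝ) * _)] at h
    simp only [hρ]
    linarith
  rw [integral_add (icosh.mul_prod iρ) (ig.mul_prod iρ2), integral_div, integral_add i1 i2, e1, e2,
    integral_prod_mul (fun u : sphere (0 : E) 1 => Real.cosh ⟪w, (u : E)⟫) ρ,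
    integral_prod_mul (fun u : sphere (0 : E) 1 => ⟪w, (u : E)⟫ * Real.sinh ⟪w, (u : E)⟫ / 2)
      (fun r : Set.Ioi (0 : ℝ) => ((r : ℝ) ^ 2 - 1) * ρ r), zρ2] at hle
  have hexp : ∫ u : sphere (0 : E) 1, Real.exp ⟪w, (u : E)⟫ ∂S
      = ∫ u : sphere (0 : E) 1, Real.cosh ⟪w, (u : E)⟫ ∂S := by
    simp only [← Real.cosh_add_sinh]
    rw [integral_add icosh isinh, integral_sinh_toSphere hn w, add_zero]
  rw [hexp]
  refine le_of_mul_le_mul_right ?_ hA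
  linarith

end Polar

/-! ### The mean width -/

lemma isProbabilityMeasure_sphereUniform {n : ℕ} (hn : 0 < n) :
    IsProbabilityMeasure (sphereUniform n) := by
  have : Nonempty (Fin n) := ⟨⟨0, hn⟩⟩
  refine ⟨?_⟩
  rw [sphereUniform, Measure.smul_apply, smul_eq_mul]
  exact ENNReal.inv_mul_cancel
    (Measure.measure_univ_ne_zero.2 <| Measure.toSphere_ne_zero (volume : Measure (EuclideanSpace ℝ (Fin n))))
    (measure_ne_top _ _)

lemma integral_exp_sphereUniform_le {n : ℕ} (hn : 0 < n) (w : EuclideanSpace ℝ (Fin n)) :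
    ∫ u, Real.exp ⟪w, (u : EuclideanSpace ℝ (Fin n))⟫ ∂(sphereUniform n)
      ≤ Real.exp (‖w‖ ^ 2 / (2 * n)) := by
  have : Nonempty (Fin n) := ⟨⟨0, hn⟩⟩
  have hpos : 0 < (volume : Measure (EuclideanSpace ℝ (Fin n))).toSphere.real Set.univ :=
    ENNReal.toReal_pos
      (Measure.measure_univ_ne_zero.2 <| Measure.toSphere_ne_zero (volume : Measure (EuclideanSpace ℝ (Fin n))))
    (measure_ne_top _ _)
  rw [sphereUniform, integral_smul_measure, ENNReal.toReal_inv, smul_eq_mul,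
    ← measureReal_def, inv_mul_le_iff₀ hpos]
  exact integral_exp_toSphere_le hn w

lemma integrable_exp_sphereUniform {n : ℕ} (hn : 0 < n) (w : EuclideanSpace ℝ (Fin n)) :
    Integrable (fun u : sphere (0 : EuclideanSpace ℝ (Fin n)) 1 =>
      Real.exp ⟪w, (u : EuclideanSpace ℝ (Fin n))⟫) (sphereUniform n) := by
  have := isProbabilityMeasure_sphereUniform hn
  have h : Continuous fun u : sphere (0 : EuclideanSpace ℝ (Fin n)) 1 =>
      Real.exp ⟪w, (u : EuclideanSpace ℝ (Fin n))⟫ := by fun_prop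
  exact h.integrable_of_hasCompactSupport (HasCompactSupport.of_compactSpace _)

/-- The maximum is compared with the exponential sum: with `L` the right-hand side, `a ≤ L - 1 +
exp (a - L)` for `a = t ⟪v i, u⟫`, and the integral of the upper bound is at most `L`. -/
lemma mul_meanWidth_le {n N : ℕ} (hn : 0 < n) (hN : 0 < N) {r : ℝ}
    (v : Fin N → EuclideanSpace ℝ (Fin n)) (hv : ∀ i, ‖v i‖ ≤ r) {t : ℝ} (ht : 0 < t) :
    t * meanWidth (convexHull ℝ (Set.range v)) ≤ Real.log N + t ^ 2 * r ^ 2 / (2 * n) := by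
  have := isProbabilityMeasure_sphereUniform hn
  have hN1 : (1 : ℝ) ≤ N := by exact_mod_cast hN
  set L := Real.log N + t ^ 2 * r ^ 2 / (2 * n) with hL
  have hL0 : 0 ≤ L := by
    have := Real.log_nonneg hN1
    positivity
  rw [meanWidth, ← integral_const_mul]
  set M : sphere (0 : EuclideanSpace ℝ (Fin n)) 1 → ℝ := fun u =>
    t * sSup ((fun x => ⟪x, (u : EuclideanSpace ℝ (Fin n))⟫) '' convexHull ℝ (Set.range v)) with hM
  by_cases hint : Integrable M (sphereUniform n)
  swap
  -- A non-integrable function has integral `0`, so no measurability of the support function is needed.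
  · rwa [integral_undef hint]
  set B : sphere (0 : EuclideanSpace ℝ (Fin n)) 1 → ℝ := fun u =>
    (L - 1) + Real.exp (-L) * ∑ i, Real.exp ⟪t • v i, (u : EuclideanSpace ℝ (Fin n))⟫ with hB
  have hsum : Integrable (fun u : sphere (0 : EuclideanSpace ℝ (Fin n)) 1 =>
      ∑ i, Real.exp ⟪t • v i, (u : EuclideanSpace ℝ (Fin n))⟫) (sphereUniform n) :=
    integrable_finsetSum _ fun i _ => integrable_exp_sphereUniform hn _
  have hMB : ∀ u, M u ≤ B u := by
    intro u
    have hhull : convexHull ℝ (Set.range v) ⊆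
        {x | ⟪x, (u : EuclideanSpace ℝ (Fin n))⟫ ≤ B u / t} := by
      refine convexHull_min ?_ ?_
      · rintro _ ⟨i, rfl⟩
        simp only [Set.mem_ofPred_eq]
        rw [le_div_iff₀ ht]
        have h1 := Real.add_one_le_exp (⟪t • v i, (u : EuclideanSpace ℝ (Fin n))⟫ - L)
        have h2 : Real.exp ⟪t • v i, (u : EuclideanSpace ℝ (Fin n))⟫
            ≤ ∑ i, Real.exp ⟪t • v i, (u : EuclideanSpace ℝ (Fin n))⟫ :=
          Finset.single_le_sum (f := fun i => Real.exp ⟪t • v i, (u : EuclideanSpace ℝ (Fin n))⟫)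
            (fun i _ => (Real.exp_pos _).le) (Finset.mem_univ i)
        have h3 := mul_le_mul_of_nonneg_left h2 (Real.exp_pos (-L)).le
        rw [sub_eq_neg_add, Real.exp_add] at h1
        rw [real_inner_smul_left] at h1 h3
        simp only [hB]
        linarith
      · exact convex_halfSpace_le
          ⟨fun x y => inner_add_left x y _, fun c x => real_inner_smul_left x _ c⟩ _
    simp only [hM]
    rw [mul_comm, ← le_div_iff₀ ht]
    refine csSup_le ?_ ?_
    · exact ⟨_, v ⟨0, hN⟩, subset_convexHull ℝ _ ⟨_, rfl⟩, rfl⟩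
    · rintro _ ⟨x, hx, rfl⟩
      exact hhull hx
  calc ∫ u, M u ∂(sphereUniform n) ≤ ∫ u, B u ∂(sphereUniform n) :=
        integral_mono hint ((integrable_const _).add (hsum.const_mul _)) hMB
    _ = (L - 1) + Real.exp (-L) * ∑ i, ∫ u, Real.exp ⟪t • v i, (u : EuclideanSpace ℝ (Fin n))⟫
          ∂(sphereUniform n) := by
        rw [integral_add (integrable_const _) (hsum.const_mul _), integral_const_mul,
          integral_finsetSum _ fun i _ => integrable_exp_sphereUniform hn _]
        simp
    _ ≤ (L - 1) + Real.exp (-L) * ∑ _i : Fin N, Real.exp (t ^ 2 * r ^ 2 / (2 * n)) := by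
        gcongr with i
        refine (integral_exp_sphereUniform_le hn _).trans ?_
        rw [norm_smul, mul_pow, Real.norm_eq_abs, sq_abs]
        gcongr
        exact hv i
    _ = L := by
        have : (∑ _i : Fin N, Real.exp (t ^ 2 * r ^ 2 / (2 * n))) = Real.exp L := by
          rw [hL, Real.exp_add, Real.exp_log (by positivity)]
          simp
        rw [this, ← Real.exp_add]
        simp

/-- If `v_1, …, v_N ∈ ℝ^n` satisfy `‖v_i‖ ≤ r`, then the mean width of
their convex hull is at most `r √(2 ln N / n)`. -/
theorem meanWidth_convexHull_le (n N : ℕ) (hn : 0 < n) (hN : 0 < N)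
    (r : ℝ) (v : Fin N → EuclideanSpace ℝ (Fin n)) (hv : ∀ i, ‖v i‖ ≤ r) :
    meanWidth (convexHull ℝ (Set.range v)) ≤ r * Real.sqrt (2 * Real.log N / n) := by
  have hr : 0 ≤ r := (norm_nonneg _).trans (hv ⟨0, hN⟩)
  have hlog : 0 ≤ Real.log N := Real.log_natCast_nonneg N
  have key := fun {t : ℝ} (ht : 0 < t) => mul_meanWidth_le hn hN v hv ht
  generalize meanWidth (convexHull ℝ (Set.range v)) = W at key ⊢
  have hn' : (0 : ℝ) < n := by exact_mod_cast hn
  rcases le_or_gt W 0 with hW | hW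
  · exact hW.trans (by positivity)
  -- For `W > 0` the bound `t W ≤ log N + t² r² / (2n)` is used at the value `t = n W / r²` minimizing
  -- its right-hand side minus its left-hand side; for `r = 0` any large `t` gives a contradiction.
  rcases hr.eq_or_lt with rfl | hr
  · have h := key (t := (Real.log N + 1) / W) (by positivity)
    rw [div_mul_cancel₀ _ hW.ne'] at h
    simp at h
    linarith
  · have h := key (t := n * W / r ^ 2) (by positivity)
    have e : (n * W / r ^ 2) ^ 2 * r ^ 2 / (2 * n) = n * W / r ^ 2 * W / 2 := by
      field_simp
    rw [e] at h
    have h2 : (W / r) ^ 2 ≤ 2 * Real.log N / n := by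
      rw [le_div_iff₀ hn']
      have : (W / r) ^ 2 * n = n * W / r ^ 2 * W := by
        field_simp
      linarith
    rw [mul_comm, ← div_le_iff₀ hr]
    exact Real.le_sqrt_of_sq_le h2
end

section
/- Let K_1, …, K_N be convex subsets of ℝ^n with K_i ⊆ λ B^n for every 1 ≤ i ≤ N (where B^n is the unit Euclidean ball). Then w(conv(K_1 ∪ ⋯ ∪ K_N)) ≤ 2 ( max_{1≤i≤N} w(K_i) + λ √(2 ln N / n) ). -/
/-!
Write `h_i` for the support function of `K_i` and `γ` for the standard Gaussian measure on `ℝ^n`.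
Support functions are positively homogeneous, so polar coordinates give
`∫ h_i dγ = A w(K_i)` with `A = ∫ ‖x‖ dγ` (`integral_stdGaussian_of_homogeneous`), and likewise for
the convex hull of the union, whose support function is at most `max_i h_i`.

It remains to bound `∫ max_i h_i dγ` by `max_i ∫ h_i dγ` plus an error (`integral_iSup_le`). This is
a discrete form of the Maurey–Pisier rotation argument. The difference is at most
`E max_i (h_i(y) - h_i(x))` for independent Gaussian vectors `x`, `y`. These are joined by the
quarter circle `cos θ x + sin θ y`, which is cut into short arcs; by rotation invariance of `γ ⊗ γ`
each arc contributes the same amount. On one arc the `h_i` are replaced by almost optimal linear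
functionals of norm at most `r`, frozen at the endpoint, and the maximum of `N` Gaussian linear
functionals is at most `r √(2 log N)` in mean (`integral_iSup_inner_le`). Summing over the arcs, the
error is `(π / 2) r √(2 log N)`.

Finally `A ≥ √(2 / π) √n ≥ (π / 4) √n`, so division by `A` turns the error into at most
`2 r √(2 log N / n)`; as mean widths are nonnegative, the remaining term `max_i w(K_i)` is at most
twice itself.
-/

open MeasureTheory Metric
open scoped RealInnerProductSpace Pointwise

open ProbabilityTheory

/-! ### Support functions -/

/-- `h` is a pointwise supremum of linear functionals `⟪s, ·⟫` with `‖s‖ ≤ r`, that is, the support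
function of a nonempty subset of the ball of radius `r`. The supremum is expressed through almost
optimal functionals, so that it need not be attained. -/
def IsSupport {n : ℕ} (r : ℝ) (h : EuclideanSpace ℝ (Fin n) → ℝ) : Prop :=
  ∀ z, ∀ η > 0, ∃ s : EuclideanSpace ℝ (Fin n), ‖s‖ ≤ r ∧ h z ≤ ⟪s, z⟫ + η ∧ ∀ y, ⟪s, y⟫ ≤ h y

lemma inner_le_sSup {n : ℕ} {r : ℝ} {K : Set (EuclideanSpace ℝ (Fin n))}
    (hK : K ⊆ closedBall 0 r) {s : EuclideanSpace ℝ (Fin n)} (hs : s ∈ K)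
    (y : EuclideanSpace ℝ (Fin n)) : ⟪s, y⟫ ≤ sSup ((fun x => ⟪x, y⟫) '' K) := by
  refine le_csSup ⟨r * ‖y‖, ?_⟩ ⟨s, hs, rfl⟩
  rintro _ ⟨x, hx, rfl⟩
  have hx' : ‖x‖ ≤ r := by simpa using hK hx
  exact (real_inner_le_norm x y).trans (by gcongr)

/-- The empty set is covered as well: `sSup ∅ = 0` is the support function of `{0}`. -/
lemma isSupport_sSup {n : ℕ} {r : ℝ} (hr : 0 ≤ r) {K : Set (EuclideanSpace ℝ (Fin n))}
    (hK : K ⊆ closedBall 0 r) :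
    IsSupport r (fun u => sSup ((fun x => ⟪x, u⟫) '' K)) := by
  intro z η hη
  rcases K.eq_empty_or_nonempty with rfl | hne
  · exact ⟨0, by simpa using hr, by simpa using hη.le, by simp⟩
  obtain ⟨_, ⟨s, hs, rfl⟩, hlt⟩ := exists_lt_of_lt_csSup (hne.image fun x => ⟪x, z⟫)
    (sub_lt_self _ hη)
  refine ⟨s, by simpa using hK hs, by linarith, inner_le_sSup hK hs⟩

section support
variable {n : ℕ} {r : ℝ} {h : EuclideanSpace ℝ (Fin n) → ℝ}

lemma IsSupport.sub_le (hh : IsSupport r h) (z y : EuclideanSpace ℝ (Fin n)) :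
    h z - h y ≤ r * ‖z - y‖ := by
  refine le_of_forall_pos_le_add fun η hη => ?_
  obtain ⟨s, hs, h1, h2⟩ := hh z η hη
  have h3 : ⟪s, z⟫ - ⟪s, y⟫ ≤ r * ‖z - y‖ := by
    rw [← inner_sub_right]
    exact (real_inner_le_norm _ _).trans (by gcongr)
  linarith [h2 y]

lemma IsSupport.continuous (hr : 0 ≤ r) (hh : IsSupport r h) : Continuous h :=
  (LipschitzWith.of_le_add_mul ⟨r, hr⟩ fun x y => by
    rw [dist_eq_norm]; have := hh.sub_le x y; change h x ≤ h y + r * _; linarith).continuous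

lemma IsSupport.map_zero (hh : IsSupport r h) : h 0 = 0 := by
  obtain ⟨s, -, -, h2⟩ := hh 0 1 one_pos
  refine le_antisymm (le_of_forall_pos_le_add fun η hη => ?_) (by simpa using h2 0)
  obtain ⟨s, -, h1, -⟩ := hh 0 η hη
  simpa using h1

lemma IsSupport.abs_apply_le (hh : IsSupport r h) (z : EuclideanSpace ℝ (Fin n)) :
    |h z| ≤ r * ‖z‖ := by
  have h1 := hh.sub_le z 0
  have h2 := hh.sub_le 0 z
  simp only [hh.map_zero, sub_zero, zero_sub, norm_neg] at h1 h2
  exact abs_le.2 ⟨by linarith, h1⟩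

lemma IsSupport.map_smul (hh : IsSupport r h) {t : ℝ} (ht : 0 ≤ t)
    (z : EuclideanSpace ℝ (Fin n)) : h (t • z) = t * h z := by
  apply le_antisymm
  · refine le_of_forall_pos_le_add fun η hη => ?_
    obtain ⟨s, -, h1, h2⟩ := hh (t • z) η hη
    rw [inner_smul_right] at h1
    nlinarith [mul_le_mul_of_nonneg_left (h2 z) ht]
  · refine le_of_forall_pos_le_add fun η hη => ?_
    obtain ⟨s, -, h1, h2⟩ := hh z (η / (t + 1)) (by positivity)
    have h3 := h2 (t • z)
    rw [inner_smul_right] at h3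
    have h4 : t * (η / (t + 1)) ≤ η := by
      rw [mul_div_assoc', div_le_iff₀ (by positivity)]; nlinarith
    nlinarith [mul_le_mul_of_nonneg_left h1 ht]

/-- `h` composed with a linear map is integrable for any measure with finite first moment. -/
lemma IsSupport.integrable_comp (hr : 0 ≤ r) (hh : IsSupport r h) {F : Type*}
    [NormedAddCommGroup F] [NormedSpace ℝ F] [MeasurableSpace F] [BorelSpace F]
    {μ : Measure F} (hμ : Integrable (fun x => ‖x‖) μ) (L : F →L[ℝ] EuclideanSpace ℝ (Fin n)) :
    Integrable (fun x => h (L x)) μ := by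
  refine (hμ.const_mul (r * ‖L‖)).mono'
    (((hh.continuous hr).comp L.continuous).measurable.aestronglyMeasurable) ?_
  refine .of_forall fun x => ?_
  calc ‖h (L x)‖ ≤ r * ‖L x‖ := hh.abs_apply_le _
    _ ≤ r * (‖L‖ * ‖x‖) := by gcongr; exact L.le_opNorm x
    _ = _ := by ring

lemma integrable_norm_stdGaussian :
    Integrable (fun x => ‖x‖) (stdGaussian (EuclideanSpace ℝ (Fin n))) :=
  IsGaussian.integrable_id.norm

lemma IsSupport.integrable (hr : 0 ≤ r) (hh : IsSupport r h) :
    Integrable h (stdGaussian (EuclideanSpace ℝ (Fin n))) :=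
  hh.integrable_comp hr integrable_norm_stdGaussian (ContinuousLinearMap.id ℝ _)

lemma integral_inner_stdGaussian (s : EuclideanSpace ℝ (Fin n)) :
    ∫ y, ⟪s, y⟫ ∂(stdGaussian (EuclideanSpace ℝ (Fin n))) = 0 :=
  integral_strongDual_stdGaussian (innerSL ℝ s)

lemma integrable_inner_stdGaussian (s : EuclideanSpace ℝ (Fin n)) :
    Integrable (fun y => ⟪s, y⟫) (stdGaussian (EuclideanSpace ℝ (Fin n))) :=
  (innerSL ℝ s).integrable_comp IsGaussian.integrable_id

lemma IsSupport.integral_nonneg (hr : 0 ≤ r) (hh : IsSupport r h) :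
    0 ≤ ∫ x, h x ∂(stdGaussian (EuclideanSpace ℝ (Fin n))) := by
  obtain ⟨s, -, -, h2⟩ := hh 0 1 one_pos
  rw [← integral_inner_stdGaussian s]
  exact integral_mono (integrable_inner_stdGaussian s) (hh.integrable hr) h2

end support

lemma le_iSup_fin {N : ℕ} (f : Fin N → ℝ) (i : Fin N) : f i ≤ ⨆ i, f i :=
  le_ciSup (Set.finite_range f).bddAbove i

lemma integrable_iSup_fin {Ω : Type*} [MeasurableSpace Ω] {μ : Measure Ω} {N : ℕ} [NeZero N]
    {f : Fin N → Ω → ℝ} (hf : ∀ i, Integrable (f i) μ) :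
    Integrable (fun x => ⨆ i, f i x) μ := by
  refine (integrable_finsetSum Finset.univ fun i _ => (hf i).abs).mono'
    (AEMeasurable.iSup fun i => (hf i).aemeasurable).aestronglyMeasurable ?_
  refine .of_forall fun x => ?_
  have key : ∀ i, |f i x| ≤ ∑ j, |f j x| := fun i =>
    Finset.single_le_sum (f := fun j => |f j x|) (fun _ _ => abs_nonneg _) (Finset.mem_univ i)
  rw [Real.norm_eq_abs, abs_le]
  constructor
  · have := le_iSup_fin (fun i => f i x) 0
    linarith [neg_abs_le (f 0 x), key 0]
  · exact ciSup_le fun i => (le_abs_self _).trans (key i)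

/-! ### Gaussian estimates -/

section gaussian
variable {n : ℕ}

lemma map_inner_stdGaussian (s : EuclideanSpace ℝ (Fin n)) :
    (stdGaussian (EuclideanSpace ℝ (Fin n))).map (fun y => ⟪s, y⟫) =
      gaussianReal 0 (‖s‖ ^ 2).toNNReal := by
  have := IsGaussian.map_eq_gaussianReal (μ := stdGaussian (EuclideanSpace ℝ (Fin n)))
    (innerSL ℝ s)
  rw [integral_strongDual_stdGaussian, variance_dual_stdGaussian, innerSL_apply_norm] at this
  exact this

lemma integrable_exp_inner (t : ℝ) (s : EuclideanSpace ℝ (Fin n)) :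
    Integrable (fun y => Real.exp (t * ⟪s, y⟫)) (stdGaussian (EuclideanSpace ℝ (Fin n))) := by
  have h := integrable_exp_mul_gaussianReal (μ := 0) (v := (‖s‖ ^ 2).toNNReal) t
  rw [← map_inner_stdGaussian s] at h
  exact h.comp_measurable (by fun_prop)

lemma integral_exp_inner (t : ℝ) (s : EuclideanSpace ℝ (Fin n)) :
    ∫ y, Real.exp (t * ⟪s, y⟫) ∂(stdGaussian (EuclideanSpace ℝ (Fin n))) =
      Real.exp (‖s‖ ^ 2 * t ^ 2 / 2) := by
  have h := mgf_gaussianReal (map_inner_stdGaussian s) t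
  rw [mgf] at h
  rw [h, Real.coe_toNNReal _ (by positivity)]
  simp

/-- Optimization over `t` of the bound coming from exponential moments, including the degenerate
cases `L = 0` and `r = 0`. -/
lemma le_mul_sqrt_of_forall {B L r : ℝ} (hL : 0 ≤ L) (hr : 0 ≤ r)
    (h : ∀ t > 0, B ≤ L / t + t * r ^ 2 / 2) : B ≤ r * Real.sqrt (2 * L) := by
  by_contra! hlt
  have hB : 0 < B := lt_of_le_of_lt (by positivity) hlt
  rcases hr.eq_or_lt with rfl | hr
  · have := h ((L + 1) / B) (by positivity)
    have h2 : L / ((L + 1) / B) = B - B / (L + 1) := by field_simp; ring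
    have : 0 < B / (L + 1) := by positivity
    nlinarith
  · have h1 := h (B / r ^ 2) (by positivity)
    have h2 : L / (B / r ^ 2) + B / r ^ 2 * r ^ 2 / 2 = (2 * L * r ^ 2 + B ^ 2) / (2 * B) := by
      field_simp
    have h3 : (r * Real.sqrt (2 * L)) ^ 2 < B ^ 2 := by gcongr
    rw [mul_pow, Real.sq_sqrt (by positivity)] at h3
    rw [h2, le_div_iff₀ (by positivity)] at h1
    nlinarith

/-- Maximal inequality: `N` centred Gaussian variables of standard deviation at most `r` have
expected maximum at most `r √(2 log N)`. -/
lemma integral_iSup_inner_le {N : ℕ} [NeZero N] {r : ℝ} (hr : 0 ≤ r)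
    (s : Fin N → EuclideanSpace ℝ (Fin n)) (hs : ∀ i, ‖s i‖ ≤ r) :
    ∫ y, ⨆ i, ⟪s i, y⟫ ∂(stdGaussian (EuclideanSpace ℝ (Fin n))) ≤
      r * Real.sqrt (2 * Real.log N) := by
  have hN : (0 : ℝ) < N := by exact_mod_cast Nat.pos_of_neZero N
  refine le_mul_sqrt_of_forall (Real.log_natCast_nonneg N) hr fun t ht => ?_
  set C : ℝ := N * Real.exp (r ^ 2 * t ^ 2 / 2) with hC
  have hC0 : 0 < C := by positivity
  have hlogC : Real.log C = Real.log N + r ^ 2 * t ^ 2 / 2 := by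
    rw [hC, Real.log_mul hN.ne' (Real.exp_pos _).ne', Real.log_exp]
  have hInt : Integrable (fun y => (1 / t) * ((∑ i, Real.exp (t * ⟪s i, y⟫)) / C +
      (Real.log C - 1))) (stdGaussian (EuclideanSpace ℝ (Fin n))) :=
    (((integrable_finsetSum _ fun i _ => integrable_exp_inner t (s i)).div_const C).add
      (integrable_const _)).const_mul _
  calc _ ≤ ∫ y, (1 / t) * ((∑ i, Real.exp (t * ⟪s i, y⟫)) / C + (Real.log C - 1))
        ∂(stdGaussian (EuclideanSpace ℝ (Fin n))) := by
        refine integral_mono (integrable_iSup_fin fun i => integrable_inner_stdGaussian (s i))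
          hInt fun y => ciSup_le fun i => ?_
        -- `log v ≤ v - 1` at `v = exp (t * a) / C`
        have h1 := Real.log_le_sub_one_of_pos
          (show 0 < Real.exp (t * ⟪s i, y⟫) / C by positivity)
        rw [Real.log_div (Real.exp_pos _).ne' hC0.ne', Real.log_exp] at h1
        have h2 : Real.exp (t * ⟪s i, y⟫) / C ≤ (∑ j, Real.exp (t * ⟪s j, y⟫)) / C := by
          gcongr
          exact Finset.single_le_sum (f := fun j => Real.exp (t * ⟪s j, y⟫))
            (fun _ _ => (Real.exp_pos _).le) (Finset.mem_univ i)
        rw [one_div, ← div_eq_inv_mul, le_div_iff₀ ht]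
        linarith
    _ = (1 / t) * ((∑ i, Real.exp (‖s i‖ ^ 2 * t ^ 2 / 2)) / C + (Real.log C - 1)) := by
        rw [integral_const_mul, integral_add
          ((integrable_finsetSum _ fun i _ => integrable_exp_inner t (s i)).div_const C)
          (integrable_const _), integral_div,
          integral_finsetSum _ fun i _ => integrable_exp_inner t (s i)]
        simp [integral_exp_inner]
    _ ≤ (1 / t) * (1 + (Real.log C - 1)) := by
        gcongr
        rw [div_le_one hC0, hC]
        calc _ ≤ ∑ _i : Fin N, Real.exp (r ^ 2 * t ^ 2 / 2) := by
              gcongr with i; exact hs i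
          _ = _ := by simp
    _ = _ := by rw [hlogC]; field_simp; ring

lemma integral_abs_gaussianReal :
    ∫ x, |x| ∂(gaussianReal 0 1) = Real.sqrt (2 / Real.pi) := by
  rw [integral_gaussianReal_eq_integral_smul one_ne_zero]
  have h1 : ∀ x : ℝ, gaussianPDFReal 0 1 x • |x| =
      (fun y => (Real.sqrt (2 * Real.pi))⁻¹ *
        (y ^ (1 : ℝ) * Real.exp (-(1 / 2) * y ^ (2 : ℝ)))) |x| := by
    intro x
    simp [gaussianPDFReal]
    ring_nf
  simp_rw [h1]
  rw [integral_comp_abs (f := fun y => (Real.sqrt (2 * Real.pi))⁻¹ *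
    (y ^ (1 : ℝ) * Real.exp (-(1 / 2) * y ^ (2 : ℝ)))), integral_const_mul,
    integral_rpow_mul_exp_neg_mul_rpow (by norm_num) (by norm_num) (by norm_num)]
  have hg : ((1 : ℝ) + 1) / 2 = 1 := by norm_num
  rw [neg_div, hg, Real.Gamma_one, Real.rpow_neg_one, Real.sqrt_mul (by norm_num),
    Real.sqrt_div (by norm_num)]
  have h2 : Real.sqrt 2 * Real.sqrt 2 = 2 := Real.mul_self_sqrt (by norm_num)
  have h3 : 0 < Real.sqrt Real.pi := Real.sqrt_pos.2 Real.pi_pos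
  field_simp
  nlinarith

/-- Since `√n ‖x‖ ≥ ∑ i, |x i|`, the mean norm of a Gaussian vector is at least `√n` times the mean
absolute value of one coordinate. -/
lemma le_integral_norm_stdGaussian :
    Real.sqrt (2 / Real.pi) * Real.sqrt n ≤
      ∫ x, ‖x‖ ∂(stdGaussian (EuclideanSpace ℝ (Fin n))) := by
  rcases Nat.eq_zero_or_pos n with rfl | hn
  · simpa using integral_nonneg fun _ => norm_nonneg _
  have hn' : 0 < Real.sqrt n := Real.sqrt_pos.2 (by exact_mod_cast hn)
  have hcoord : ∀ i : Fin n, ∫ x, |x i| ∂(stdGaussian (EuclideanSpace ℝ (Fin n))) =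
      Real.sqrt (2 / Real.pi) := by
    intro i
    have h := map_inner_stdGaussian (EuclideanSpace.single i (1 : ℝ))
    simp only [EuclideanSpace.inner_single_left, map_one, one_mul, PiLp.norm_single, norm_one,
      one_pow, Real.toNNReal_one] at h
    rw [← integral_abs_gaussianReal, ← h, integral_map (by fun_prop) (by fun_prop)]
  have hInt : ∀ i : Fin n, Integrable (fun x : EuclideanSpace ℝ (Fin n) => |x i|)
      (stdGaussian (EuclideanSpace ℝ (Fin n))) := by
    intro i
    refine integrable_norm_stdGaussian.mono' (by fun_prop) (.of_forall fun x => ?_)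
    simpa using PiLp.norm_apply_le x i
  calc Real.sqrt (2 / Real.pi) * Real.sqrt n
      = ∫ x, (Real.sqrt n)⁻¹ * ∑ i, |x i| ∂(stdGaussian (EuclideanSpace ℝ (Fin n))) := by
        rw [integral_const_mul, integral_finsetSum _ fun i _ => hInt i]
        simp only [hcoord, Finset.sum_const, Finset.card_univ, Fintype.card_fin, nsmul_eq_mul]
        field_simp
        rw [Real.sq_sqrt (by positivity)]
    _ ≤ _ := by
        refine integral_mono ((integrable_finsetSum _ fun i _ => hInt i).const_mul _)
          integrable_norm_stdGaussian fun x => ?_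
        rw [← div_eq_inv_mul, div_le_iff₀ hn', EuclideanSpace.norm_eq, ← Real.sqrt_mul
          (by positivity)]
        refine Real.le_sqrt_of_sq_le ?_
        have := sq_sum_le_card_mul_sum_sq (s := Finset.univ) (f := fun i => |x i|)
        simp only [Finset.card_univ, Fintype.card_fin] at this
        simp only [Real.norm_eq_abs]
        linarith

end gaussian

/-! ### Comparison of the expected maximum with the maximum of expectations -/

section maureyPisier
variable {n N : ℕ} [NeZero N] {r : ℝ} {h : Fin N → EuclideanSpace ℝ (Fin n) → ℝ}

lemma integrable_iSup_sub (hr : 0 ≤ r) (hh : ∀ i, IsSupport r (h i)) {F : Type*}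
    [NormedAddCommGroup F] [NormedSpace ℝ F] [MeasurableSpace F] [BorelSpace F]
    {μ : Measure F} (hμ : Integrable (fun x => ‖x‖) μ)
    (L₁ L₂ : F →L[ℝ] EuclideanSpace ℝ (Fin n)) :
    Integrable (fun p => ⨆ i, (h i (L₁ p) - h i (L₂ p))) μ :=
  integrable_iSup_fin fun i =>
    ((hh i).integrable_comp hr hμ L₁).sub ((hh i).integrable_comp hr hμ L₂)

lemma integrable_norm_prod :
    Integrable (fun p => ‖p‖) ((stdGaussian (EuclideanSpace ℝ (Fin n))).prod
      (stdGaussian (EuclideanSpace ℝ (Fin n)))) :=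
  IsGaussian.integrable_id.norm

/-- The linear combination `(x, y) ↦ a x + b y`. -/
noncomputable def combo (n : ℕ) (a b : ℝ) :
    EuclideanSpace ℝ (Fin n) × EuclideanSpace ℝ (Fin n) →L[ℝ] EuclideanSpace ℝ (Fin n) :=
  a • ContinuousLinearMap.fst ℝ _ _ + b • ContinuousLinearMap.snd ℝ _ _

@[simp] lemma combo_apply (a b : ℝ) (p : EuclideanSpace ℝ (Fin n) × EuclideanSpace ℝ (Fin n)) :
    combo n a b p = a • p.1 + b • p.2 := rfl

/-- One step of the rotation argument. For fixed `x`, replacing each `h i` by an almost optimal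
linear functional at `x` bounds the increment from `c x - d y` to `x` by linear functionals
of `y`, to which the Gaussian maximal inequality applies. -/
lemma integral_step_le (hr : 0 ≤ r) (hh : ∀ i, IsSupport r (h i)) {c d : ℝ} (hc : c ≤ 1)
    (hd : 0 ≤ d) :
    ∫ p, ⨆ i, (h i (combo n 1 0 p) - h i (combo n c (-d) p))
      ∂((stdGaussian (EuclideanSpace ℝ (Fin n))).prod (stdGaussian (EuclideanSpace ℝ (Fin n)))) ≤
    (1 - c) * r * ∫ x, ‖x‖ ∂(stdGaussian (EuclideanSpace ℝ (Fin n))) +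
      d * (r * Real.sqrt (2 * Real.log N)) := by
  have hInt := integrable_iSup_sub hr hh integrable_norm_prod (combo n 1 0) (combo n c (-d))
  rw [integral_prod _ hInt, ← integral_const_mul]
  calc _ ≤ ∫ x, ((1 - c) * r * ‖x‖ + d * (r * Real.sqrt (2 * Real.log N)))
        ∂(stdGaussian (EuclideanSpace ℝ (Fin n))) := by
        refine integral_mono_ae hInt.integral_prod_left
          ((integrable_norm_stdGaussian.const_mul _).add (integrable_const _)) ?_
        filter_upwards [hInt.prod_right_ae] with x hx
        refine le_of_forall_pos_le_add fun η hη => ?_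
        choose s hs h1 h2 using fun i => hh i x η hη
        have hInt2 : Integrable (fun y => d * (⨆ i, ⟪s i, y⟫) + ((1 - c) * r * ‖x‖ + η))
            (stdGaussian (EuclideanSpace ℝ (Fin n))) :=
          ((integrable_iSup_fin fun i => integrable_inner_stdGaussian (s i)).const_mul d).add
            (integrable_const _)
        calc _ ≤ ∫ y, (d * (⨆ i, ⟪s i, y⟫) + ((1 - c) * r * ‖x‖ + η))
              ∂(stdGaussian (EuclideanSpace ℝ (Fin n))) := by
              refine integral_mono hx hInt2 fun y => ciSup_le fun i => ?_
              have h3 := h2 i (c • x + (-d) • y)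
              rw [inner_add_right, inner_smul_right, inner_smul_right] at h3
              have h4 : ⟪s i, x⟫ ≤ r * ‖x‖ :=
                (real_inner_le_norm _ _).trans (by gcongr; exact hs i)
              have h5 := mul_le_mul_of_nonneg_left (le_iSup_fin (fun i => ⟪s i, y⟫) i) hd
              have h6 := mul_le_mul_of_nonneg_left h4 (sub_nonneg.2 hc)
              have h7 := h1 i
              simp only [combo_apply, one_smul, zero_smul, add_zero]
              linarith
          _ = d * ∫ y, (⨆ i, ⟪s i, y⟫) ∂(stdGaussian (EuclideanSpace ℝ (Fin n))) +
                ((1 - c) * r * ‖x‖ + η) := by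
              rw [integral_add ((integrable_iSup_fin fun i =>
                integrable_inner_stdGaussian (s i)).const_mul d) (integrable_const _),
                integral_const_mul]
              simp
          _ ≤ d * (r * Real.sqrt (2 * Real.log N)) + ((1 - c) * r * ‖x‖ + η) := by
              gcongr
              exact integral_iSup_inner_le hr s hs
          _ = _ := by ring
    _ = _ := by
        rw [integral_add (integrable_norm_stdGaussian.const_mul _) (integrable_const _)]
        simp

/-- Two independent Gaussian vectors `x`, `y` are joined by the quarter circle
`z θ = cos θ • x + sin θ • y`, cut into `m + 1` arcs of angle `δ`. By rotation invariance of
`γ ⊗ γ` all arcs contribute equally, and each contributes at most `O(δ ^ 2) + δ r √(2 log N)`;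
the total angle is `π / 2`, and `m → ∞` removes the quadratic error. -/
lemma integral_iSup_sub_le (hr : 0 ≤ r) (hh : ∀ i, IsSupport r (h i)) :
    ∫ p, ⨆ i, (h i (combo n 0 1 p) - h i (combo n 1 0 p))
      ∂((stdGaussian (EuclideanSpace ℝ (Fin n))).prod (stdGaussian (EuclideanSpace ℝ (Fin n)))) ≤
    Real.pi / 2 * (r * Real.sqrt (2 * Real.log N)) := by
  set γ := stdGaussian (EuclideanSpace ℝ (Fin n)) with hγ
  set A := ∫ x, ‖x‖ ∂γ with hA
  have hA0 : 0 ≤ A := integral_nonneg fun _ => norm_nonneg _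
  set S := r * Real.sqrt (2 * Real.log N) with hS
  have hS0 : 0 ≤ S := by positivity
  have key : ∀ m : ℕ, ∫ p, ⨆ i, (h i (combo n 0 1 p) - h i (combo n 1 0 p)) ∂(γ.prod γ) ≤
      ((Real.pi / 2) ^ 2 / 2 * r * A) / ((m : ℝ) + 1) + Real.pi / 2 * S := by
    intro m
    set δ : ℝ := Real.pi / 2 / ((m : ℝ) + 1) with hδ
    have hδ0 : 0 ≤ δ := by positivity
    have hm : ((m + 1 : ℕ) : ℝ) * δ = Real.pi / 2 := by rw [hδ]; push_cast; field_simp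
    have hδ1 : δ ≤ Real.pi / 2 := by
      rw [← hm]; push_cast; nlinarith [(Nat.cast_nonneg m : (0 : ℝ) ≤ m)]
    -- the point at angle `θ` on the quarter circle from `x` to `y`
    let z : ℝ → (EuclideanSpace ℝ (Fin n) × EuclideanSpace ℝ (Fin n) →L[ℝ]
      EuclideanSpace ℝ (Fin n)) := fun θ => combo n (Real.cos θ) (Real.sin θ)
    have hz0 : z 0 = combo n 1 0 := by simp [z]
    have hz1 : z (Real.pi / 2) = combo n 0 1 := by simp [z]
    have hsi : ∀ a b, Integrable (fun p => ⨆ i, (h i (z a p) - h i (z b p))) (γ.prod γ) :=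
      fun a b => integrable_iSup_sub hr hh integrable_norm_prod _ _
    have hrot : ∀ θ, ∫ p, ⨆ i, (h i (z θ p) - h i (z (θ - δ) p)) ∂(γ.prod γ) =
        ∫ p, ⨆ i, (h i (combo n 1 0 p) - h i (combo n (Real.cos δ) (-Real.sin δ) p))
          ∂(γ.prod γ) := by
      intro θ
      have hmap := IsGaussian.map_rotation_eq_self (μ := γ) integral_id_stdGaussian θ
      conv_rhs => rw [← hmap]
      rw [integral_map (by fun_prop)]
      · congr 1 with p
        congr 1 with i
        congr 2
        · simp [z, ContinuousLinearMap.rotation_apply]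
        · simp only [z, combo_apply, ContinuousLinearMap.rotation_apply, Real.cos_sub,
            Real.sin_sub]
          module
      · rw [hmap]
        exact (integrable_iSup_sub hr hh integrable_norm_prod _ _).aestronglyMeasurable
    calc ∫ p, ⨆ i, (h i (combo n 0 1 p) - h i (combo n 1 0 p)) ∂(γ.prod γ)
        ≤ ∫ p, ∑ k ∈ Finset.range (m + 1),
            ⨆ i, (h i (z ((k + 1 : ℕ) * δ) p) - h i (z (k * δ) p)) ∂(γ.prod γ) := by
          refine integral_mono (integrable_iSup_sub hr hh integrable_norm_prod _ _)
            (integrable_finsetSum _ fun k _ => hsi _ _) fun p => ciSup_le fun i => ?_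
          have htel := Finset.sum_range_sub (fun k : ℕ => h i (z (k * δ) p)) (m + 1)
          rw [hm, Nat.cast_zero, zero_mul, hz0, hz1] at htel
          rw [← htel]
          exact Finset.sum_le_sum fun k _ =>
            le_iSup_fin (fun i => h i (z ((k + 1 : ℕ) * δ) p) - h i (z (k * δ) p)) i
      _ = ∑ k ∈ Finset.range (m + 1),
            ∫ p, ⨆ i, (h i (combo n 1 0 p) - h i (combo n (Real.cos δ) (-Real.sin δ) p))
              ∂(γ.prod γ) := by
          rw [integral_finsetSum _ fun k _ => hsi _ _]
          refine Finset.sum_congr rfl fun k _ => ?_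
          rw [← hrot ((k + 1 : ℕ) * δ)]
          have : ((k + 1 : ℕ) : ℝ) * δ - δ = k * δ := by push_cast; ring
          rw [this]
      _ ≤ ∑ k ∈ Finset.range (m + 1), (δ ^ 2 / 2 * r * A + δ * S) := by
          refine Finset.sum_le_sum fun k _ => ?_
          refine (integral_step_le hr hh (Real.cos_le_one δ)
            (Real.sin_nonneg_of_nonneg_of_le_pi hδ0 (by linarith [Real.pi_pos]))).trans ?_
          gcongr
          · linarith [Real.one_sub_sq_div_two_le_cos (x := δ)]
          · exact Real.sin_le hδ0
      _ = _ := by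
          rw [Finset.sum_const, Finset.card_range, nsmul_eq_mul, hδ]
          push_cast
          field_simp
  have hlim : Filter.Tendsto (fun m : ℕ => ((Real.pi / 2) ^ 2 / 2 * r * A) / ((m : ℝ) + 1) +
      Real.pi / 2 * S) Filter.atTop (nhds (0 + Real.pi / 2 * S)) :=
    Filter.Tendsto.add_const _ (by
      have hlim0 := (tendsto_one_div_add_atTop_nhds_zero_nat (𝕜 := ℝ)).const_mul
        ((Real.pi / 2) ^ 2 / 2 * r * A)
      simp only [mul_one_div, mul_zero] at hlim0
      exact hlim0)
  rw [zero_add] at hlim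
  exact ge_of_tendsto' hlim key

/-- The expected maximum of support functions exceeds the maximum of their expectations by at most
`(π / 2) r √(2 log N)`: the expectations are written as integrals over an independent copy. -/
lemma integral_iSup_le (hr : 0 ≤ r) (hh : ∀ i, IsSupport r (h i)) :
    ∫ x, ⨆ i, h i x ∂(stdGaussian (EuclideanSpace ℝ (Fin n))) ≤
      (⨆ i, ∫ x, h i x ∂(stdGaussian (EuclideanSpace ℝ (Fin n)))) +
        Real.pi / 2 * (r * Real.sqrt (2 * Real.log N)) := by
  set γ := stdGaussian (EuclideanSpace ℝ (Fin n)) with hγ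
  have hInt := integrable_iSup_sub hr hh (integrable_norm_prod (n := n)) (combo n 0 1) (combo n 1 0)
  have h1 := integral_iSup_sub_le hr hh (n := n)
  rw [integral_prod_symm _ hInt] at h1
  calc ∫ x, ⨆ i, h i x ∂γ
      ≤ ∫ y, ((⨆ i, ∫ x, h i x ∂γ) +
          ∫ x, ⨆ i, (h i (combo n 0 1 (x, y)) - h i (combo n 1 0 (x, y))) ∂γ) ∂γ := by
        refine integral_mono_ae (integrable_iSup_fin fun i => (hh i).integrable hr)
          ((integrable_const _).add hInt.integral_prod_right) ?_
        filter_upwards [hInt.prod_left_ae] with y hy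
        refine ciSup_le fun i => ?_
        have h2 : h i y - ∫ x, h i x ∂γ = ∫ x, (h i y - h i x) ∂γ := by
          rw [integral_sub (integrable_const _) ((hh i).integrable hr)]
          simp [hγ]
        have h3 : ∫ x, (h i y - h i x) ∂γ ≤
            ∫ x, ⨆ i, (h i (combo n 0 1 (x, y)) - h i (combo n 1 0 (x, y))) ∂γ := by
          refine integral_mono ((integrable_const _).sub ((hh i).integrable hr)) hy fun x => ?_
          refine le_trans (le_of_eq ?_) (le_iSup_fin
            (fun i => h i (combo n 0 1 (x, y)) - h i (combo n 1 0 (x, y))) i)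
          simp
        have h4 := le_iSup_fin (fun i => ∫ x, h i x ∂γ) i
        linarith
    _ ≤ _ := by
        rw [integral_add (integrable_const _) hInt.integral_prod_right]
        simpa using h1

end maureyPisier

/-! ### Polar coordinates -/

section polar
variable {n : ℕ}

/-- Density of the standard Gaussian measure, identified through its characteristic function. -/
lemma stdGaussian_eq_withDensity :
    stdGaussian (EuclideanSpace ℝ (Fin n)) =
      (volume : Measure (EuclideanSpace ℝ (Fin n))).withDensity
        fun x => ENNReal.ofReal (((2 * Real.pi) ^ ((n : ℝ) / 2))⁻¹ *
          Real.exp (-(1 / 2) * ‖x‖ ^ 2)) := by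
  have hpos : (0 : ℝ) < ((2 * Real.pi) ^ ((n : ℝ) / 2))⁻¹ := by positivity
  have hInt : Integrable (fun x : EuclideanSpace ℝ (Fin n) =>
      ((2 * Real.pi) ^ ((n : ℝ) / 2))⁻¹ * Real.exp (-(1 / 2) * ‖x‖ ^ 2)) := by
    have h := GaussianFourier.integrable_cexp_neg_mul_sq_norm_add (b := (1 / 2 : ℂ))
      (by norm_num) 0 (0 : EuclideanSpace ℝ (Fin n))
    refine (h.norm.congr (.of_forall fun x => ?_)).const_mul _
    simp only [Complex.norm_exp]
    congr 1
    simp [← Complex.ofReal_pow]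
  have : IsFiniteMeasure ((volume : Measure (EuclideanSpace ℝ (Fin n))).withDensity
        fun x => ENNReal.ofReal (((2 * Real.pi) ^ ((n : ℝ) / 2))⁻¹ *
          Real.exp (-(1 / 2) * ‖x‖ ^ 2))) :=
    isFiniteMeasure_withDensity_ofReal hInt.2
  refine Measure.ext_of_charFun (funext fun t => ?_)
  rw [charFun_stdGaussian, charFun_apply, integral_withDensity_eq_integral_toReal_smul
    (by fun_prop) (.of_forall fun _ => ENNReal.ofReal_lt_top)]
  have h := GaussianFourier.integral_cexp_neg_mul_sq_norm_add (b := (1 / 2 : ℂ))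
      (by norm_num) Complex.I t
  have h2 : ∀ x : EuclideanSpace ℝ (Fin n), (ENNReal.ofReal (((2 * Real.pi) ^ ((n : ℝ) / 2))⁻¹ *
          Real.exp (-(1 / 2) * ‖x‖ ^ 2))).toReal • Complex.exp (⟪x, t⟫ * Complex.I) =
      (((2 * Real.pi) ^ ((n : ℝ) / 2))⁻¹ : ℝ) *
        Complex.exp (-(1 / 2) * ‖x‖ ^ 2 + Complex.I * ⟪t, x⟫) := by
    intro x
    rw [ENNReal.toReal_ofReal (by positivity), Complex.exp_add, real_inner_comm, Complex.real_smul]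
    push_cast
    ring_nf
  simp_rw [h2]
  rw [integral_const_mul, h, finrank_euclideanSpace_fin]
  have h3 : ((Real.pi : ℂ) / (1 / 2)) ^ ((n : ℂ) / 2) =
      (((2 * Real.pi) ^ ((n : ℝ) / 2) : ℝ) : ℂ) := by
    rw [Complex.ofReal_cpow (by positivity)]
    push_cast
    congr 1
    ring
  rw [h3, ← mul_assoc, ← Complex.ofReal_mul, inv_mul_cancel₀ (by positivity)]
  simp only [Complex.ofReal_one, one_mul, Complex.I_sq]
  congr 1
  ring

/-- In polar coordinates the Gaussian measure factors into the uniform measure of the sphere and a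
radial part, so the Gaussian mean of a positively homogeneous function is `E ‖x‖` times its mean
over the sphere. -/
lemma integral_stdGaussian_of_homogeneous (hn : 0 < n) {f : EuclideanSpace ℝ (Fin n) → ℝ}
    (hf : ∀ t : ℝ, 0 ≤ t → ∀ z, f (t • z) = t * f z) :
    ∫ x, f x ∂(stdGaussian (EuclideanSpace ℝ (Fin n))) =
      (∫ x, ‖x‖ ∂(stdGaussian (EuclideanSpace ℝ (Fin n)))) *
        ∫ u, f (u : EuclideanSpace ℝ (Fin n)) ∂(sphereUniform n) := by
  have : Nonempty (Fin n) := ⟨⟨0, hn⟩⟩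
  set ρ : ℝ → ℝ := fun t => ((2 * Real.pi) ^ ((n : ℝ) / 2))⁻¹ * Real.exp (-(1 / 2) * t ^ 2) with hρ
  set J := ∫ t : Set.Ioi (0 : ℝ), ρ t * (t : ℝ)
    ∂(Measure.volumeIoiPow (Module.finrank ℝ (EuclideanSpace ℝ (Fin n)) - 1))
  have key : ∀ g : EuclideanSpace ℝ (Fin n) → ℝ, (∀ t : ℝ, 0 ≤ t → ∀ z, g (t • z) = t * g z) →
      ∫ x, g x ∂(stdGaussian (EuclideanSpace ℝ (Fin n))) =
        (∫ u : sphere (0 : EuclideanSpace ℝ (Fin n)) 1, g u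
          ∂(volume : Measure (EuclideanSpace ℝ (Fin n))).toSphere) * J := by
    intro g hg
    rw [stdGaussian_eq_withDensity, integral_withDensity_eq_integral_toReal_smul
      (by fun_prop) (.of_forall fun _ => ENNReal.ofReal_lt_top)]
    calc _ = ∫ x : EuclideanSpace ℝ (Fin n), ρ ‖x‖ * g x := by
          refine integral_congr_ae (.of_forall fun x => ?_)
          simp only [hρ]
          rw [ENNReal.toReal_ofReal (by positivity), smul_eq_mul]
      _ = ∫ x : ({(0 : EuclideanSpace ℝ (Fin n))}ᶜ : Set (EuclideanSpace ℝ (Fin n))),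
            ρ ‖(x : EuclideanSpace ℝ (Fin n))‖ * g x
              ∂((volume : Measure (EuclideanSpace ℝ (Fin n))).comap (↑)) := by
          rw [integral_subtype_comap (measurableSet_singleton _).compl
            fun x : EuclideanSpace ℝ (Fin n) => ρ ‖x‖ * g x, restrict_compl_singleton]
      _ = ∫ q : sphere (0 : EuclideanSpace ℝ (Fin n)) 1 × Set.Ioi (0 : ℝ), g q.1 * (ρ q.2 * (q.2 : ℝ))
            ∂((volume : Measure (EuclideanSpace ℝ (Fin n))).toSphere.prod
              (Measure.volumeIoiPow (Module.finrank ℝ (EuclideanSpace ℝ (Fin n)) - 1))) := by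
          rw [← (volume : Measure (EuclideanSpace ℝ (Fin n))).measurePreserving_homeomorphUnitSphereProd.integral_comp
            (Homeomorph.measurableEmbedding _)]
          refine integral_congr_ae (.of_forall fun x => ?_)
          have hx : ‖(x : EuclideanSpace ℝ (Fin n))‖ ≠ 0 := norm_ne_zero_iff.2 x.2
          simp only [homeomorphUnitSphereProd_apply_snd_coe, homeomorphUnitSphereProd_apply_fst_coe]
          rw [hg _ (by positivity)]
          field_simp
      _ = _ := integral_prod_mul (fun u : sphere (0 : EuclideanSpace ℝ (Fin n)) 1 => g u)
          (fun t : Set.Ioi (0 : ℝ) => ρ t * (t : ℝ))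
  rw [key f hf, key (fun x => ‖x‖) fun t ht z => by rw [norm_smul, Real.norm_of_nonneg ht]]
  have hV : ((volume : Measure (EuclideanSpace ℝ (Fin n))).toSphere Set.univ).toReal ≠ 0 :=
    ENNReal.toReal_ne_zero.2 ⟨by
      rw [Ne, Measure.measure_univ_eq_zero]; exact Measure.toSphere_ne_zero _,
      measure_ne_top _ _⟩
  simp only [sphereUniform, integral_smul_measure, norm_eq_of_mem_sphere, integral_const,
    Measure.real, smul_eq_mul, mul_one, ENNReal.toReal_inv]
  change _ = ((volume : Measure (EuclideanSpace ℝ (Fin n))).toSphere Set.univ).toReal * J *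
    (((volume : Measure (EuclideanSpace ℝ (Fin n))).toSphere Set.univ).toReal⁻¹ * _)
  field_simp

end polar

/-- If `K_1, …, K_N ⊆ ℝ^n` are convex sets contained in `r Bⁿ`, then
`w(conv(K_1 ∪ ⋯ ∪ K_N)) ≤ 2 (max_i w(K_i) + r √(2 ln N / n))`. -/
theorem meanWidth_convexHull_union_le (n N : ℕ) (hn : 0 < n) (hN : 0 < N)
    (r : ℝ) (hr : 0 ≤ r) (K : Fin N → Set (EuclideanSpace ℝ (Fin n)))
    (hKconv : ∀ i, Convex ℝ (K i))
    (hKsub : ∀ i, K i ⊆ closedBall (0 : EuclideanSpace ℝ (Fin n)) r) :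
    meanWidth (convexHull ℝ (⋃ i, K i)) ≤
      2 * ((⨆ i, meanWidth (K i)) + r * Real.sqrt (2 * Real.log N / n)) := by
  have : NeZero N := ⟨hN.ne'⟩
  set γ := stdGaussian (EuclideanSpace ℝ (Fin n)) with hγ
  set A := ∫ x, ‖x‖ ∂γ with hA
  have hn' : (0 : ℝ) < n := by exact_mod_cast hn
  have hsn : 0 < Real.sqrt n := Real.sqrt_pos.2 hn'
  -- `π / 4 ≤ √(2 / π)` because `π ^ 3 ≤ 32`
  have hconst : Real.pi / 4 ≤ Real.sqrt (2 / Real.pi) := by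
    refine Real.le_sqrt_of_sq_le ?_
    rw [le_div_iff₀ Real.pi_pos]
    have h1 := Real.pi_lt_d2
    have h2 : Real.pi ^ 3 ≤ 3.15 ^ 3 := by gcongr
    nlinarith
  have hAn : Real.pi / 4 * Real.sqrt n ≤ A :=
    (by gcongr : _ ≤ Real.sqrt (2 / Real.pi) * Real.sqrt n).trans le_integral_norm_stdGaussian
  have hA0 : 0 < A := lt_of_lt_of_le (by positivity) hAn
  let h : Set (EuclideanSpace ℝ (Fin n)) → EuclideanSpace ℝ (Fin n) → ℝ :=
    fun K u => sSup ((fun x => ⟪x, u⟫) '' K)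
  have hconvsub : convexHull ℝ (⋃ i, K i) ⊆ closedBall (0 : EuclideanSpace ℝ (Fin n)) r :=
    convexHull_min (Set.iUnion_subset hKsub) (convex_closedBall _ _)
  have hs : ∀ i, IsSupport r (h (K i)) := fun i => isSupport_sSup hr (hKsub i)
  have hsc : IsSupport r (h (convexHull ℝ (⋃ i, K i))) := isSupport_sSup hr hconvsub
  have hw : ∀ C : Set (EuclideanSpace ℝ (Fin n)), IsSupport r (h C) →
      ∫ x, h C x ∂γ = A * meanWidth C := fun C hC =>
    integral_stdGaussian_of_homogeneous hn fun t ht z => hC.map_smul ht z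
  -- Among the `K i` there may be empty sets, with `h (K i) = 0`; this only increases the right side.
  have hle : ∀ u, h (convexHull ℝ (⋃ i, K i)) u ≤ ⨆ i, h (K i) u := by
    intro u
    rcases (⋃ i, K i).eq_empty_or_nonempty with he | hne
    · have : ∀ i, K i = ∅ := Set.iUnion_eq_empty.1 he
      simp [h, this]
    · refine csSup_le ((hne.mono (subset_convexHull ℝ _)).image _) ?_
      rintro _ ⟨x, hx, rfl⟩
      have hhalf : Convex ℝ {x : EuclideanSpace ℝ (Fin n) | ⟪x, u⟫ ≤ ⨆ i, h (K i) u} :=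
        convex_halfSpace_le (f := fun x : EuclideanSpace ℝ (Fin n) => ⟪x, u⟫)
          ⟨fun x y => inner_add_left x y u, fun c x => real_inner_smul_left x u c⟩ _
      refine convexHull_min (Set.iUnion_subset fun i x hx => ?_) hhalf hx
      exact (inner_le_sSup (hKsub i) hx u).trans (le_iSup_fin (fun i => h (K i) u) i)
  have hmax : ⨆ i, ∫ x, h (K i) x ∂γ = A * ⨆ i, meanWidth (K i) := by
    rw [Real.mul_iSup_of_nonneg hA0.le]
    exact iSup_congr fun i => hw _ (hs i)
  have hnonneg : 0 ≤ ⨆ i, meanWidth (K i) := by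
    have := (hs 0).integral_nonneg hr
    rw [← hγ, hw _ (hs 0)] at this
    exact (nonneg_of_mul_nonneg_right this hA0).trans (le_iSup_fin (fun i => meanWidth (K i)) 0)
  set S := Real.sqrt (2 * Real.log N)
  have hmain : A * meanWidth (convexHull ℝ (⋃ i, K i)) ≤
      A * (⨆ i, meanWidth (K i)) + Real.pi / 2 * (r * S) := by
    rw [← hw _ hsc, ← hmax]
    exact (integral_mono (hsc.integrable hr)
      (integrable_iSup_fin fun i => (hs i).integrable hr) hle).trans (integral_iSup_le hr hs)
  have hS : Real.sqrt (2 * Real.log N / n) = S / Real.sqrt n := Real.sqrt_div' _ hn'.le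
  have herr : Real.pi / 2 * (r * S) ≤ A * (2 * (r * (S / Real.sqrt n))) := by
    calc Real.pi / 2 * (r * S)
        = Real.pi / 4 * Real.sqrt n * (2 * (r * (S / Real.sqrt n))) := by field_simp; ring
      _ ≤ _ := by gcongr
  rw [hS]
  refine le_of_mul_le_mul_left ?_ hA0
  nlinarith [mul_nonneg hA0.le hnonneg]
end
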